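/- Let q ≥ 4 be a prime power and let m > n > 0 be integers with gcd(m, n, q−1) = 1. If gcd(m−n, q−1) > 2q(log log q)/(log q) (natural logarithms), then there exists a nonzero element a of F_q such that x^m + a x^n permutes F_q. Moreover, letting T denote the number of elements a ∈ F_q for which x^m + a x^n permutes F_q, and putting r := (q−1)/gcd(m−n, q−1), one has (q − 2√q + 1)/r^{r−1} − (r−3)√q − 2 ≤ T/(r−1)! ≤ (q + 2√q + 1)/r^{r−1} + (r−3)√q. -/

import Mathlib

/-!
Write `s = gcd(m - n, q - 1)`, `q - 1 = r s` and `m = n + e s`, so that `n` is prime to `s` and `e` is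
prime to `r`.  Let `μ` be the group of `s`-th powers in `F_qˣ`; it has order `r`.  Since
`x ^ m + a x ^ n = x ^ n (a + (x ^ s) ^ e)`, this polynomial permutes `F_q` exactly when `a + ζ ^ e`
never vanishes on `μ` and `ζ ↦ ζ ^ n (a + ζ ^ e) ^ s` permutes `μ` (`bijective_iff_induced`).

To count such `a`, fix a permutation `σ` of `μ` and count the `a` for which the induced map is
proportional to `σ`.  Every good `a` is met by exactly `r` permutations.  With `χ` a multiplicative
character of order `r` and `b_ζ ^ s = ζ ^ n / σ ζ`, proportionality says that
`χ ((a + ζ ^ e) b_ζ)` is independent of `ζ`.  This condition is detected by summing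
`∏ χ ((a + ζ ^ e) b_ζ) ^ t_ζ` over the tuples `t ∈ (ℤ/r)^μ` with coordinate sum zero.  The zero tuple
gives the main term, and for the others the Weil bound
`|∑ₐ ∏ χ ^ tᵢ (a + pᵢ) + 1| ≤ (|supp t| - 2) √q` holds; the `1` is the value of the summand at infinity.
Adding up over `t` and `σ` gives the two estimates (`count_bound`, `permutation_count`).  The
hypothesis on `s` forces `r ^ r < √q` for `r ≥ 3`, which makes the lower bound exceed `1`, so some
nonzero `a` works (`one_lt_count`).

The Weil bound is proved from scratch.  By Stepanov's method (`stepanov`), an auxiliary polynomial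
with high-order zeros bounds the number of solutions of `f(x) ^ ((Q - 1) / d) = ω` in fields whose
order `Q` is a suitable square; this gives character sums of size `O(q ^ k)` over the extensions of
degree `2k` (`charSum_le`).  The sums over extensions are the power sums attached to the L-function
`∑ Λ(g) T ^ deg g` over monic `g`, where `Λ(g) = ∏ ψᵢ (g (pᵢ))`; the Euler product enters as the
identity `logDeriv_eulerProduct`.  This L-function is a polynomial of degree less than the number of
points, so its reciprocal roots, whose even power sums are `O(q ^ k)`, have absolute value at most
`√q` (`newton_bound`), and its linear coefficient is the required sum (`weil_bound`).  When the product
of the characters is trivial, the inversion `a ↦ 1 / (a + p)` removes one point and improves the bound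
(`weil_bound_of_prod_eq_one`).
-/

/-! ### Nonvanishing of the auxiliary polynomial -/

section

open Polynomial

/-- Kummer's irreducibility criterion. A factor of degree `e` with root of norm `N` gives
`N ^ d = a ^ e`, so `a ^ gcd(d, e)` is a `d`-th power; roots of unity then produce an `ℓ`-th root
of `a` for some prime `ℓ ∣ d`. -/
theorem kummer_irred {L : Type*} [Field L] {d : ℕ} (hd : 0 < d) {ζ : L}
    (hζ : IsPrimitiveRoot ζ d) {a : L} (ha0 : a ≠ 0)
    (ha : ∀ ℓ : ℕ, ℓ.Prime → ℓ ∣ d → ∀ b : L, b ^ ℓ ≠ a) :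
    Irreducible (X ^ d - C a : L[X]) := by
  have hu : ¬ IsUnit (X ^ d - C a : L[X]) := by
    rw [Polynomial.isUnit_iff_degree_eq_zero, degree_X_pow_sub_C hd, Nat.cast_eq_zero]
    exact hd.ne'
  obtain ⟨g, hg, hg'⟩ := WfDvdMonoid.exists_irreducible_factor hu (X_pow_sub_C_ne_zero hd a)
  suffices natDegree g = d from (associated_of_dvd_of_natDegree_le hg'
    (X_pow_sub_C_ne_zero hd a) (this.trans natDegree_X_pow_sub_C.symm).ge).irreducible hg
  by_contra h
  have hle : natDegree g ≤ d :=
    (natDegree_le_of_dvd hg' (X_pow_sub_C_ne_zero hd a)).trans_eq natDegree_X_pow_sub_C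
  have hpos : 0 < natDegree g :=
    natDegree_pos_iff_degree_pos.mpr (Polynomial.degree_pos_of_irreducible hg)
  have key : (Algebra.norm L (AdjoinRoot.root g)) ^ d = a ^ g.natDegree := by
    have := eval₂_eq_zero_of_dvd_of_eval₂_eq_zero _ _ hg' (AdjoinRoot.eval₂_root g)
    rw [eval₂_sub, eval₂_pow, eval₂_C, eval₂_X, sub_eq_zero] at this
    rw [← map_pow, this, ← AdjoinRoot.algebraMap_eq, Algebra.norm_algebraMap,
      (AdjoinRoot.powerBasis hg.ne_zero).finrank, AdjoinRoot.powerBasis_dim hg.ne_zero]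
  set N := Algebra.norm L (AdjoinRoot.root g) with hN
  obtain ⟨e, he⟩ := Nat.gcd_dvd_left d g.natDegree
  set k := d.gcd g.natDegree with hk
  have hk0 : 0 < k := Nat.gcd_pos_of_pos_left _ hd
  have he1 : e ≠ 1 := by
    rintro rfl
    have : d ∣ g.natDegree := by
      rw [mul_one] at he
      rw [he]; exact Nat.gcd_dvd_right _ _
    exact h (le_antisymm hle (Nat.le_of_dvd hpos this))
  -- Bézout turns `N ^ d = a ^ deg g` into `a ^ gcd = c ^ d`
  obtain ⟨c, hc⟩ : ∃ c : L, a ^ k = c ^ d := by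
    have hb := Nat.gcd_eq_gcd_ab d g.natDegree
    refine ⟨a ^ (d.gcdA g.natDegree) * N ^ (d.gcdB g.natDegree), ?_⟩
    have : a ^ (k : ℤ) = a ^ (d * d.gcdA g.natDegree + g.natDegree * d.gcdB g.natDegree : ℤ) := by
      rw [← hb]
    rw [zpow_add₀ ha0, zpow_mul, zpow_mul, zpow_natCast, zpow_natCast, zpow_natCast, ← key] at this
    rw [this, mul_pow]
    congr 1
    · rw [← zpow_natCast, ← zpow_natCast, ← zpow_mul, ← zpow_mul, mul_comm]
    · rw [← zpow_natCast, ← zpow_natCast, ← zpow_mul, ← zpow_mul, mul_comm]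
  have hε : (c ^ e / a) ^ k = 1 := by
    rw [div_pow, ← pow_mul, mul_comm e k, ← he, hc, div_self]
    rw [← hc]; exact pow_ne_zero _ ha0
  have hζ' : IsPrimitiveRoot (ζ ^ e) k := hζ.pow hd (by rw [mul_comm]; exact he)
  have : NeZero k := ⟨hk0.ne'⟩
  obtain ⟨i, -, hi⟩ := hζ'.eq_pow_of_pow_eq_one hε
  obtain ⟨ℓ, hℓ, hℓe⟩ := Nat.exists_prime_and_dvd he1
  obtain ⟨e', rfl⟩ := hℓe
  refine ha ℓ hℓ (he ▸ ⟨k * e', by ring⟩) ((c / ζ ^ i) ^ e') ?_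
  rw [← pow_mul, mul_comm e' ℓ, div_pow, ← pow_mul ζ, mul_comm i, pow_mul ζ, hi]
  have hc0 : c ≠ 0 := by
    rintro rfl
    rw [zero_pow hd.ne'] at hc
    exact pow_ne_zero _ ha0 hc
  field_simp

/-- The substitution `z ↦ x ^ Q` on bivariate polynomials, where `z` is the inner and `x` the outer
variable. -/
noncomputable def frobSub (K : Type*) [Field K] (Q : ℕ) : K[X][X] →+* K[X] :=
  eval₂RingHom (expand K Q : K[X] →+* K[X]) X

/-- The substitution `z ↦ x ^ Q` loses nothing when the degree in `x` is below `Q`: the base `Q`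
expansion of an exponent recovers both exponents. -/
theorem frobSub_inj {K : Type*} [Field K] {Q : ℕ} (R : K[X][X]) (hR : R.natDegree < Q)
    (h0 : frobSub K Q R = 0) : R = 0 := by
  have hQ : 0 < Q := by lia
  have hsum : frobSub K Q R = ∑ i ∈ Finset.range Q, expand K Q (R.coeff i) * X ^ i := by
    rw [frobSub, coe_eval₂RingHom, eval₂_eq_sum_range' _ hR]
    rfl
  ext i j
  by_cases hi : i < Q
  · have h1 : (frobSub K Q R).coeff (Q * j + i) = (R.coeff i).coeff j := by
      rw [hsum, finsetSum_coeff, Finset.sum_eq_single i]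
      · rw [coeff_mul_X_pow', if_pos (by lia), Nat.add_sub_cancel, coeff_expand_mul' hQ]
      · intro b hb hbi
        rw [coeff_mul_X_pow']
        split_ifs with hle
        · rw [coeff_expand hQ, if_neg]
          intro hdvd
          have hb' := Finset.mem_range.mp hb
          have hm : b ≡ Q * j + i [MOD Q] := (Nat.modEq_iff_dvd' hle).mpr hdvd
          have : b % Q = (Q * j + i) % Q := hm
          rw [Nat.mul_add_mod, Nat.mod_eq_of_lt hb', Nat.mod_eq_of_lt hi] at this
          exact hbi this
        · rfl
      · intro hn
        exact absurd (Finset.mem_range.mpr hi) hn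
    rw [← h1, h0]; simp
  · rw [coeff_eq_zero_of_natDegree_lt (show R.natDegree < i by lia)]; simp

theorem natDegree_det_le {R : Type*} [CommRing R] {ι : Type*} [Fintype ι] [DecidableEq ι]
    (M : Matrix ι ι R[X]) (b : ι → ℕ) (hb : ∀ i j, (M i j).natDegree ≤ b j) :
    M.det.natDegree ≤ ∑ j, b j := by
  rw [Matrix.det_apply]
  refine natDegree_sum_le_of_forall_le _ _ fun σ _ => ?_
  refine (natDegree_smul_le _ _).trans ?_
  refine (natDegree_prod_le _ _).trans ?_
  exact Finset.sum_le_sum fun j _ => hb _ _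

/-- With `x` the outer and `z` the inner variable, `f(z) / f(x)` is not an `ℓ`-th power in the
function field, as its multiplicity along `z = p` shows. -/
theorem not_pow_mul {K : Type*} [Field K] {f : K[X]} (hf : f ≠ 0) {ℓ : ℕ} (hℓ : ℓ.Prime) {p : K}
    (hp : ¬ ℓ ∣ f.rootMultiplicity p) (u v : K[X][X]) (hv : v ≠ 0) :
    u ^ ℓ * f.map C ≠ v ^ ℓ * C f := by
  intro h
  have hf0 : (f.map C : K[X][X]) ≠ 0 := (Polynomial.map_ne_zero_iff C_injective).mpr hf
  have hCf : (C f : K[X][X]) ≠ 0 := C_ne_zero.mpr hf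
  have hu : u ≠ 0 := by
    rintro rfl
    rw [zero_pow hℓ.ne_zero, zero_mul] at h
    exact mul_ne_zero (pow_ne_zero _ hv) hCf h.symm
  have hpr : Prime (C (X - C p) : K[X][X]) := prime_C_iff.mpr (prime_X_sub_C p)
  have e1 : emultiplicity (C (X - C p)) (f.map C : K[X][X]) = 0 := by
    rw [emultiplicity_eq_zero, C_dvd_iff_dvd_coeff]
    intro hd
    have := hd f.natDegree
    rw [coeff_map, coeff_natDegree] at this
    exact (prime_X_sub_C p).not_isUnit (isUnit_of_dvd_unit this
      (isUnit_C.mpr (leadingCoeff_ne_zero.mpr hf).isUnit))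
  have e2 : emultiplicity (C (X - C p)) (C f : K[X][X]) = f.rootMultiplicity p := by
    rw [emultiplicity_eq_coe]
    simp only [← C_pow, C_dvd_iff_dvd_coeff]
    constructor
    · intro i
      rw [coeff_C]; split_ifs
      · exact pow_rootMultiplicity_dvd f p
      · exact dvd_zero _
    · intro hd
      have := hd 0
      rw [coeff_C_zero] at this
      exact (pow_rootMultiplicity_not_dvd hf p) this
  have fin (w : K[X][X]) (hw : w ≠ 0) : FiniteMultiplicity (C (X - C p) : K[X][X]) w :=
    FiniteMultiplicity.of_prime_left hpr hw
  have e := congrArg (emultiplicity (C (X - C p) : K[X][X])) h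
  rw [emultiplicity_mul hpr, emultiplicity_mul hpr, emultiplicity_pow hpr, emultiplicity_pow hpr,
    e1, e2, (fin u hu).emultiplicity_eq_multiplicity, (fin v hv).emultiplicity_eq_multiplicity,
    add_zero] at e
  norm_cast at e
  exact hp ((Nat.dvd_add_right (dvd_mul_right ℓ _)).mp (e ▸ dvd_mul_right ℓ _))

/-- The auxiliary polynomial `∑ hᵢ(x ^ Q, x) f ^ (t i)` vanishes only trivially. If it vanishes,
then `P = ∑ hᵢ(z, x) Y ^ i` and `Φ = f(x) Y ^ d - f(z)` acquire the common zero `Y = f ^ t` under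
`z ↦ x ^ Q`, so the substitution kills their resultant. The `x`-degree of the resultant is below `Q`,
hence it is zero already, which contradicts the irreducibility of `Φ` over the function field. -/
theorem nonvanishing {K : Type*} [Field K] {d Q H t : ℕ} (hd : 0 < d) {ζ : K}
    (hζ : IsPrimitiveRoot ζ d) {f : K[X]} (hf : f ≠ 0)
    (hmul : ∀ ℓ : ℕ, ℓ.Prime → ℓ ∣ d → ∃ p : K, ¬ ℓ ∣ f.rootMultiplicity p)
    (hfQ : expand K Q f = f ^ Q) (ht : Q = d * t + 1)
    (h : ℕ → K[X][X]) (hdeg : ∀ i, (h i).natDegree ≤ H)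
    (hQ : d * H + (d - 1) * f.natDegree < Q)
    (h0 : ∑ i ∈ Finset.range d, frobSub K Q (h i) * (f ^ t) ^ i = 0) :
    ∀ i < d, h i = 0 := by
  set P : K[X][X][X] := ∑ i ∈ Finset.range d, C (h i) * X ^ i with hP
  set Φ : K[X][X][X] := C (f.map C) * X ^ d - C (C f) with hΦ
  have hPc (i : ℕ) : P.coeff i = if i < d then h i else 0 := by
    simp [hP, finsetSum_coeff, coeff_C_mul, coeff_X_pow]
  suffices hP0 : P = 0 by
    intro i hi
    have := hPc i
    rw [hP0, if_pos hi] at this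
    simpa using this.symm
  by_contra hPne
  have hPdeg : P.natDegree < d := by
    refine lt_of_le_of_lt (natDegree_sum_le_of_forall_le (n := d - 1) _ _ fun i hi => ?_) (by lia)
    exact (natDegree_C_mul_X_pow_le _ _).trans (by have := Finset.mem_range.mp hi; lia)
  have hf0 : (f.map C : K[X][X]) ≠ 0 := (Polynomial.map_ne_zero_iff C_injective).mpr hf
  have hCf : (C f : K[X][X]) ≠ 0 := C_ne_zero.mpr hf
  have hΦdeg : Φ.natDegree = d := by
    rw [hΦ, natDegree_sub_C, natDegree_C_mul_X_pow _ _ hf0]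
  have hΦc (k : ℕ) : (Φ.coeff k).natDegree ≤ f.natDegree := by
    rw [hΦ, coeff_sub, coeff_C_mul, coeff_X_pow, coeff_C]
    refine (natDegree_sub_le_of_le (m := f.natDegree) (n := 0) ?_ ?_).trans (by simp)
    · split_ifs <;> simp
    · split_ifs <;> simp
  set R := P.resultant Φ P.natDegree Φ.natDegree with hR
  -- `P` and `Φ` are coprime over the fraction field, where `Φ` is irreducible
  have hRne : R ≠ 0 := by
    let L := FractionRing K[X][X]
    let ι : K[X][X] →+* L := algebraMap _ _
    have hι : Function.Injective ι := IsFractionRing.injective _ _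
    have hιf : ι (f.map C) ≠ 0 := (map_ne_zero_iff ι hι).mpr hf0
    have hιg : ι (C f) ≠ 0 := (map_ne_zero_iff ι hι).mpr hCf
    have hirr : Irreducible (X ^ d - C (ι (C f) / ι (f.map C)) : L[X]) := by
      have hζ' : IsPrimitiveRoot (ι (C (C ζ))) d :=
        hζ.map_of_injective (f := (ι.comp C).comp C)
          (hι.comp (C_injective.comp C_injective))
      refine kummer_irred hd hζ' (div_ne_zero hιg hιf) fun ℓ hℓ hℓd b hb => ?_
      obtain ⟨p, hp⟩ := hmul ℓ hℓ hℓd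
      obtain ⟨u, v, hv, rfl⟩ := IsFractionRing.div_surjective (A := K[X][X]) b
      have hv0 : v ≠ 0 := nonZeroDivisors.ne_zero hv
      have hιv : ι v ≠ 0 := (map_ne_zero_iff ι hι).mpr hv0
      refine not_pow_mul hf hℓ hp u v hv0 (hι ?_)
      rw [map_mul, map_mul, map_pow, map_pow]
      change (ι u / ι v) ^ ℓ = _ at hb
      rw [div_pow, div_eq_div_iff (pow_ne_zero _ hιv) hιf] at hb
      rw [hb, mul_comm]
    have hΦι : Φ.map ι = C (ι (f.map C)) * (X ^ d - C (ι (C f) / ι (f.map C))) := by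
      rw [hΦ, mul_sub, ← C_mul, mul_div_cancel₀ _ hιf]
      simp
    have hPι : P.map ι ≠ 0 := (Polynomial.map_ne_zero_iff hι).mpr hPne
    have hcop : IsCoprime (P.map ι) (Φ.map ι) := by
      rw [hΦι, isCoprime_mul_unit_left_right (isUnit_C.mpr hιf.isUnit)]
      refine IsCoprime.symm ((hirr.coprime_iff_not_dvd).mpr fun hdvd => ?_)
      have := natDegree_le_of_dvd hdvd hPι
      rw [natDegree_X_pow_sub_C, natDegree_map_eq_of_injective hι] at this
      lia
    have hres : resultant (P.map ι) (Φ.map ι) ≠ 0 := by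
      rw [Ne, resultant_eq_zero_iff]
      tauto
    rw [natDegree_map_eq_of_injective hι, natDegree_map_eq_of_injective hι,
      resultant_map_map] at hres
    exact fun h => hres (by rw [← hR, h, map_zero])
  -- the common root `f ^ t` forces the resultant to vanish after substitution
  have hRφ : frobSub K Q R = 0 := by
    obtain ⟨u, v, -, -, huv⟩ := exists_mul_add_mul_eq_C_resultant P Φ le_rfl le_rfl
      (Or.inr (by rw [hΦdeg]; exact hd.ne'))
    have e := congrArg (eval₂ (frobSub K Q) (f ^ t)) huv
    rw [eval₂_add, eval₂_mul, eval₂_mul, eval₂_C, ← hR] at e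
    have e1 : eval₂ (frobSub K Q) (f ^ t) P = 0 := by
      rw [hP, eval₂_finsetSum, ← h0]
      simp
    have e2 : eval₂ (frobSub K Q) (f ^ t) Φ = 0 := by
      have e3 : frobSub K Q (f.map C) = f := by
        have : (expand K Q : K[X] →+* K[X]).comp C = C := by ext; simp
        rw [frobSub, coe_eval₂RingHom, eval₂_map, this, eval₂_C_X]
      have e4 : frobSub K Q (C f) = f ^ Q := by
        rw [← hfQ, frobSub, coe_eval₂RingHom, eval₂_C]; rfl
      rw [hΦ, eval₂_sub, eval₂_mul, eval₂_C, eval₂_C, eval₂_X_pow, e3, e4, ht, ← pow_mul]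
      ring
    rw [e1, e2, zero_mul, zero_mul, add_zero] at e
    exact e.symm
  refine hRne (frobSub_inj R (lt_of_le_of_lt ?_ hQ) hRφ)
  rw [hR, resultant]
  refine (natDegree_det_le _ (Fin.addCases (fun _ => f.natDegree) (fun _ => H)) ?_).trans ?_
  · intro i j
    refine Fin.addCases (fun j => ?_) (fun j => ?_) j
    · simp only [sylvester, Matrix.of_apply, Fin.addCases_left]
      split_ifs
      · exact hΦc _
      · simp
    · simp only [sylvester, Matrix.of_apply, Fin.addCases_right]
      split_ifs
      · rw [hPc]; split_ifs
        · exact hdeg _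
        · simp
      · simp
  · rw [Fin.sum_univ_add]
    simp only [Fin.addCases_left, Fin.addCases_right, Finset.sum_const, Finset.card_univ,
      Fintype.card_fin, smul_eq_mul, hΦdeg]
    have : P.natDegree * f.natDegree ≤ (d - 1) * f.natDegree :=
      Nat.mul_le_mul_right _ (by lia)
    lia

end

/-! ### Stepanov's bound for the fibres of a power of a polynomial -/

section

open Polynomial

theorem dvd_hasseDeriv_pow {K : Type*} [Field K] (f : K[X]) (N a : ℕ) :
    f ^ (N - a) ∣ hasseDeriv a (f ^ N) := by
  induction N generalizing a with
  | zero => simp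
  | succ N ih =>
    rw [pow_succ, hasseDeriv_mul]
    refine Finset.dvd_sum fun x hx => ?_
    obtain ⟨b, c⟩ := x
    have hbc : b + c = a := by simpa [Finset.mem_antidiagonal] using hx
    rcases Nat.eq_zero_or_pos c with rfl | hc
    · rw [hasseDeriv_zero']
      by_cases h : a ≤ N
      · have : N + 1 - a = (N - b) + 1 := by lia
        rw [this, pow_succ]
        exact mul_dvd_mul (ih b) dvd_rfl
      · have : N + 1 - a = 0 := by lia
        rw [this, pow_zero]; exact one_dvd _
    · exact ((pow_dvd_pow f (by lia)).trans (ih b)).mul_right _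

/-- The `l`-th Hasse derivative of `f ^ N * h` is `f ^ (N - l)` times a polynomial of controlled
degree that depends linearly on `h`. -/
theorem exists_hasse_quot {K : Type*} [Field K] {f : K[X]} (hf : f ≠ 0) {N l : ℕ} (hl : l ≤ N) :
    ∃ U : K[X] →ₗ[K] K[X], ∀ h : K[X], hasseDeriv l (f ^ N * h) = f ^ (N - l) * U h ∧
      (U h).natDegree ≤ h.natDegree + l * f.natDegree := by
  choose w hw using fun a => dvd_hasseDeriv_pow f N a
  refine ⟨∑ ab ∈ Finset.HasAntidiagonal.antidiagonal l,
    (LinearMap.mulLeft K (w ab.1 * f ^ (l - ab.1))) ∘ₗ hasseDeriv ab.2, fun h => ?_⟩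
  have key : hasseDeriv l (f ^ N * h) = f ^ (N - l) * (∑ ab ∈ Finset.HasAntidiagonal.antidiagonal l,
    (LinearMap.mulLeft K (w ab.1 * f ^ (l - ab.1))) ∘ₗ hasseDeriv ab.2) h := by
    rw [hasseDeriv_mul, LinearMap.sum_apply, Finset.mul_sum]
    refine Finset.sum_congr rfl fun ab hab => ?_
    have hab' : ab.1 + ab.2 = l := by simpa [Finset.mem_antidiagonal] using hab
    have : N - ab.1 = (N - l) + (l - ab.1) := by lia
    rw [hw ab.1, this, pow_add]
    simp only [LinearMap.comp_apply, LinearMap.mulLeft_apply]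
    ring
  refine ⟨key, ?_⟩
  set u := (∑ ab ∈ Finset.HasAntidiagonal.antidiagonal l,
    (LinearMap.mulLeft K (w ab.1 * f ^ (l - ab.1))) ∘ₗ hasseDeriv ab.2) h with hu
  by_cases hu0 : u = 0
  · rw [hu0]; simp
  have h1 := natDegree_hasseDeriv_le (f ^ N * h) l
  rw [key, natDegree_mul (pow_ne_zero _ hf) hu0, natDegree_pow] at h1
  have h2 : (f ^ N * h).natDegree ≤ N * f.natDegree + h.natDegree :=
    natDegree_mul_le.trans (by rw [natDegree_pow])
  obtain ⟨e, rfl⟩ := Nat.exists_eq_add_of_le hl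
  rw [Nat.add_sub_cancel_left] at h1
  rw [add_mul] at h2
  lia

/-- For Hasse derivatives of order below the cardinality `Q` of the field, a `Q`-th power behaves
like a constant. -/
theorem taylor_coeff_mul_pow_card {K : Type*} [Field K] [Fintype K] (x : K) (F P : K[X]) {l : ℕ}
    (hl : l < Fintype.card K) :
    (taylor x (F * P ^ Fintype.card K)).coeff l = (taylor x F).coeff l * P.eval x := by
  have hQ : 0 < Fintype.card K := Fintype.card_pos
  rw [taylor_mul, taylor_pow, ← FiniteField.expand_card, coeff_mul,
    Finset.sum_eq_single (l, 0)]
  · rw [coeff_expand hQ]; simp [taylor_coeff_zero]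
  · rintro ⟨a, b⟩ hab hne
    have hab' : a + b = l := by simpa [Finset.mem_antidiagonal] using hab
    rw [coeff_expand hQ, if_neg, mul_zero]
    intro hd
    rcases Nat.eq_zero_or_pos b with rfl | hb
    · exact hne (by rw [← hab', add_zero])
    · have := Nat.le_of_dvd hb hd
      lia
  · simp

set_option maxHeartbeats 1600000 in
/-- Stepanov's bound. Over a field with `Q = (dL + 1) ^ 2` elements, put `t = (Q - 1) / d`. An auxiliary
polynomial `G = ∑ hᵢⱼ x ^ (jQ) f ^ (t i)` with small `deg hᵢⱼ` is chosen so that `f ^ M G` vanishes to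
order `M = dL` wherever `f ^ t = ω ≠ 0`. These conditions are linear in the coefficients because
`f ^ t` may be replaced by `ω` and `x ^ Q` by `x`. Comparing degrees bounds the number of such points
by `t + O(√Q)`, where the constant depends only on `deg f`. -/
theorem stepanov {K : Type*} [Field K] [Fintype K] {d L : ℕ} (hd : 0 < d)
    (hcard : Fintype.card K = (d * L + 1) ^ 2) {f : K[X]} (hf : f ≠ 0) (hm : 0 < f.natDegree)
    (hmul : ∀ ℓ : ℕ, ℓ.Prime → ℓ ∣ d → ∃ p : K, ¬ ℓ ∣ f.rootMultiplicity p)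
    (hL : f.natDegree * (f.natDegree + 2) ≤ L) (ω : K) (S : Finset K)
    (hS : ∀ x ∈ S, (f.eval x) ^ (L * (d * L + 2)) = ω ∧ f.eval x ≠ 0) :
    S.card ≤ L * (d * L + 2) + (6 * f.natDegree + 4) * (d * L + 1) := by
  classical
  set m := f.natDegree with hmdef
  set t := L * (d * L + 2) with ht
  set M := d * L with hM
  have hLpos : 0 < L := by
    have : 0 < m * (m + 2) := by positivity
    lia
  have hMpos : 0 < M := by positivity
  have hmt : m < t := by
    have : m * (m + 2) ≤ L * (d * L + 2) := hL.trans (Nat.le_mul_of_pos_right _ (by lia))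
    nlinarith
  set Q := Fintype.card K with hQdef
  have hQt : Q = d * t + 1 := by rw [hcard, ht]; ring
  have hQM : Q = M ^ 2 + 2 * M + 1 := by rw [hcard]; ring
  obtain ⟨H, hH⟩ : ∃ H, t = m + H + 1 := ⟨t - m - 1, by lia⟩
  -- each of the `d * J` unknown polynomials has `H + 1` coefficients
  set J := L + m + 2 with hJ
  obtain ⟨ζ, hζ⟩ : ∃ ζ : K, IsPrimitiveRoot ζ d := by
    obtain ⟨g, hg⟩ := IsCyclic.exists_ofOrder_eq_natCard (α := Kˣ)
    have h1 : IsPrimitiveRoot (g : K) (d * t) := by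
      have := IsPrimitiveRoot.orderOf g
      rw [hg, Nat.card_units, Nat.card_eq_fintype_card, ← hQdef, hQt, Nat.add_sub_cancel] at this
      exact IsPrimitiveRoot.coe_units_iff.mpr this
    exact ⟨_, h1.pow (by positivity) (mul_comm d t)⟩
  have hUex : ∀ i l : ℕ, ∃ U : K[X] →ₗ[K] K[X], l ≤ M + t * i → ∀ h : K[X],
      hasseDeriv l (f ^ (M + t * i) * h) = f ^ (M + t * i - l) * U h ∧
      (U h).natDegree ≤ h.natDegree + l * m := by
    intro i l
    by_cases hl : l ≤ M + t * i
    · obtain ⟨U, hU⟩ := exists_hasse_quot hf hl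
      exact ⟨U, fun _ => hU⟩
    · exact ⟨0, fun h => absurd h hl⟩
  choose U hU using hUex
  let V := Fin d × Fin J × Fin (H + 1) → K
  let hp (i : Fin d) (j : Fin J) : V →ₗ[K] K[X] :=
    ∑ k : Fin (H + 1), (monomial (R := K) (k : ℕ)) ∘ₗ LinearMap.proj (i, j, k)
  have hpdeg (i j) (v : V) : (hp i j v).natDegree ≤ H := by
    simp only [hp, LinearMap.sum_apply, LinearMap.comp_apply]
    refine natDegree_sum_le_of_forall_le _ _ fun k _ => (natDegree_monomial_le _).trans ?_
    lia
  let cond (l : ℕ) : V →ₗ[K] K[X] := ∑ i : Fin d, ∑ j : Fin J,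
    LinearMap.mulLeft K (C (ω ^ (i : ℕ)) * X ^ (j : ℕ)) ∘ₗ U i l ∘ₗ hp i j
  have hcond (l : ℕ) (v : V) : cond l v = ∑ i : Fin d, ∑ j : Fin J,
      C (ω ^ (i : ℕ)) * X ^ (j : ℕ) * U i l (hp i j v) := by
    simp only [cond, LinearMap.sum_apply, LinearMap.comp_apply, LinearMap.mulLeft_apply]
  set W := H + M * m + J with hW
  have hcdeg (l : ℕ) (hl : l < M) (v : V) : (cond l v).natDegree < W := by
    rw [hcond]
    refine lt_of_le_of_lt (natDegree_sum_le_of_forall_le (n := W - 1) _ _ fun i _ =>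
      natDegree_sum_le_of_forall_le _ _ fun j _ => ?_) (by lia)
    have h1 := (hU i l (hl.le.trans (Nat.le_add_right _ _)) (hp i j v)).2
    have h2 := hpdeg i j v
    have h3 : (C (ω ^ (i : ℕ)) * X ^ (j : ℕ) : K[X]).natDegree ≤ j := natDegree_C_mul_X_pow_le _ _
    have h4 : l * m ≤ M * m := Nat.mul_le_mul_right _ hl.le
    have h5 := natDegree_mul_le (p := (C (ω ^ (i : ℕ)) * X ^ (j : ℕ) : K[X]))
      (q := U i l (hp i j v))
    have := j.2
    lia
  let T : V →ₗ[K] (Fin M × Fin W → K) := LinearMap.pi fun lk => lcoeff K lk.2 ∘ₗ cond lk.1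
  -- there are more unknown coefficients than linear conditions
  have hker : LinearMap.ker T ≠ ⊥ := by
    apply LinearMap.ker_ne_bot_of_finrank_lt
    simp only [V, Module.finrank_fintype_fun_eq_card, Fintype.card_prod, Fintype.card_fin]
    have e1 : d * (J * (H + 1)) + (m + 2) * (d * m) = M * (H + 1) + (m + 2) * (M * (M + 2)) := by
      have : d * t = M * (M + 2) := by rw [ht, hM]; ring
      rw [← this, hH, hJ, hM]; ring
    have e2 : M * W = M * (H + 1) + M * M * m + M * (m + 1) + M * L := by rw [hW, hJ]; ring
    have e3 : M * L ≤ M * M := Nat.mul_le_mul_left _ (Nat.le_mul_of_pos_left _ hd)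
    have e4 : (m + 2) * (d * m) ≤ M := by
      calc (m + 2) * (d * m) = d * (m * (m + 2)) := by ring
        _ ≤ M := Nat.mul_le_mul_left _ hL
    nlinarith
  obtain ⟨v, hvT, hv0⟩ := Submodule.exists_mem_ne_zero_of_ne_bot hker
  have hc0 (l : ℕ) (hl : l < M) : cond l v = 0 := by
    ext k
    by_cases hk : k < W
    · have := congrFun (LinearMap.mem_ker.mp hvT) (⟨l, hl⟩, ⟨k, hk⟩)
      simpa [T] using this
    · rw [coeff_eq_zero_of_natDegree_lt ((hcdeg l hl v).trans_le (not_lt.mp hk))]; simp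
  let hh (i : ℕ) : K[X][X] := if hi : i < d then
    ∑ j : Fin J, ∑ k : Fin (H + 1), monomial (k : ℕ) (monomial (j : ℕ) (v (⟨i, hi⟩, j, k))) else 0
  have hhφ (i : Fin d) : frobSub K Q (hh i) = ∑ j : Fin J, (X ^ (j : ℕ)) ^ Q * hp i j v := by
    simp only [hh, dif_pos i.2, map_sum, hp, LinearMap.sum_apply, LinearMap.comp_apply,
      Finset.mul_sum]
    refine Finset.sum_congr rfl fun j _ => Finset.sum_congr rfl fun k _ => ?_
    rw [frobSub, coe_eval₂RingHom, eval₂_monomial]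
    change expand K Q _ * _ = _
    rw [expand_monomial]
    simp only [← C_mul_X_pow_eq_monomial]
    change C (v (i, j, k)) * _ * _ = _ * (C (v (i, j, k)) * _)
    ring
  set G : K[X] := ∑ i ∈ Finset.range d, frobSub K Q (hh i) * (f ^ t) ^ i with hG
  -- `v ≠ 0` and the nonvanishing lemma give `G ≠ 0`
  have hGne : G ≠ 0 := by
    intro h0
    have := nonvanishing (H := H) hd hζ hf hmul (FiniteField.expand_card f) hQt hh ?_ ?_ h0
    · apply hv0
      ext ⟨i, j, k⟩
      have h1 := this i i.2
      have h2 := congrArg (fun p => (p.coeff (k : ℕ)).coeff (j : ℕ)) h1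
      simp only [hh, dif_pos i.2, finsetSum_coeff, coeff_monomial, coeff_zero] at h2
      rw [Finset.sum_eq_single j, Finset.sum_eq_single k] at h2
      · exact (by simpa using h2 : v (i, j, k) = 0)
      · intro b _ hb
        rw [if_neg (fun h => hb (Fin.ext h))]; simp
      · simp
      · intro b _ hb
        refine Finset.sum_eq_zero fun c _ => ?_
        split_ifs
        · rw [coeff_monomial, if_neg (fun h => hb (Fin.ext h))]
        · simp
      · simp
    · intro i
      simp only [hh]
      split_ifs
      · refine natDegree_sum_le_of_forall_le _ _ fun j _ =>
          natDegree_sum_le_of_forall_le _ _ fun k _ => (natDegree_monomial_le _).trans (by lia)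
      · simp
    · rw [← hmdef, ← hQdef, hQt, hH]
      have : (d - 1) * m ≤ d * m := Nat.mul_le_mul_right _ (by lia)
      nlinarith
  have hGexp : f ^ M * G = ∑ i : Fin d, ∑ j : Fin J,
      (f ^ (M + t * i) * hp i j v) * (X ^ (j : ℕ)) ^ Q := by
    rw [hG, Finset.sum_range, Finset.mul_sum]
    refine Finset.sum_congr rfl fun i _ => ?_
    rw [hhφ, Finset.sum_mul, Finset.mul_sum]
    refine Finset.sum_congr rfl fun j _ => ?_
    rw [pow_add, pow_mul]; ring
  have hdvd : ∀ x ∈ S, (X - C x) ^ M ∣ f ^ M * G := by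
    intro x hx
    obtain ⟨hx1, hx2⟩ := hS x hx
    rw [X_sub_C_pow_dvd_iff, ← taylor_apply, X_pow_dvd_iff]
    intro l hl
    have hlQ : l < Q := by rw [hQM]; nlinarith
    rw [hGexp, map_sum, finsetSum_coeff]
    simp only [map_sum, finsetSum_coeff]
    have : ∀ (i : Fin d) (j : Fin J),
        (taylor x (f ^ (M + t * i) * hp i j v * (X ^ (j : ℕ)) ^ Q)).coeff l =
        f.eval x ^ (M - l) * (C (ω ^ (i : ℕ)) * X ^ (j : ℕ) * U i l (hp i j v)).eval x := by
      intro i j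
      rw [hQdef, taylor_coeff_mul_pow_card _ _ _ hlQ, taylor_coeff,
        (hU i l (hl.le.trans (Nat.le_add_right _ _)) (hp i j v)).1]
      have : M + t * i - l = (M - l) + t * i := Nat.sub_add_comm hl.le
      rw [this, ← hx1]
      simp only [eval_mul, eval_pow, eval_C, eval_X, pow_add, ← pow_mul]
      ring
    simp only [this, ← Finset.mul_sum, ← eval_finsetSum]
    rw [← hcond, hc0 l hl]; simp
  have hdvd2 : ∏ x ∈ S, (X - C x) ^ M ∣ f ^ M * G := by
    refine Finset.prod_dvd_of_coprime (fun x _ y _ hxy => ?_) hdvd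
    exact (isCoprime_X_sub_C_of_isUnit_sub (sub_ne_zero.mpr hxy).isUnit).pow
  -- comparing `M * |S|` with the degree of `f ^ M * G`
  have hdeg1 := natDegree_le_of_dvd hdvd2 (mul_ne_zero (pow_ne_zero _ hf) hGne)
  rw [natDegree_prod_of_monic _ _ fun x _ => (monic_X_sub_C x).pow M] at hdeg1
  simp only [natDegree_pow, natDegree_X_sub_C, mul_one, Finset.sum_const, smul_eq_mul] at hdeg1
  have hdeg2 : (f ^ M * G).natDegree ≤ (M + t * (d - 1)) * m + H + (J - 1) * Q := by
    rw [hGexp]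
    refine natDegree_sum_le_of_forall_le _ _ fun i _ =>
      natDegree_sum_le_of_forall_le _ _ fun j _ => ?_
    refine natDegree_mul_le.trans (add_le_add (natDegree_mul_le.trans (add_le_add ?_ ?_)) ?_)
    · rw [natDegree_pow]
      refine Nat.mul_le_mul_right _ (Nat.add_le_add_left (Nat.mul_le_mul_left _ ?_) _)
      have := i.2; lia
    · exact hpdeg i j v
    · rw [← pow_mul, natDegree_X_pow]
      refine Nat.mul_le_mul_right _ ?_
      have := j.2; lia
  have hfin := hdeg1.trans hdeg2
  have a1 : t * (d - 1) * m + t ≤ d * t * m := by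
    obtain ⟨d', rfl⟩ := Nat.exists_eq_add_of_lt hd
    simp only [zero_add, Nat.add_sub_cancel]
    nlinarith
  have a2 : d * t = M * (M + 2) := by rw [ht, hM]; ring
  have a3 : (J - 1) = L + m + 1 := by lia
  have a4 : M * t = L * (Q - 1) := by rw [hQt, Nat.add_sub_cancel, ht, hM]; ring
  have a5 : L * Q = M * t + L := by
    rw [a4, hQt, Nat.add_sub_cancel]; ring
  have a6 : L ≤ M := Nat.le_mul_of_pos_left _ hd
  refine Nat.le_of_mul_le_mul_left (?_ : M * _ ≤ M * _) hMpos
  rw [a3] at hfin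
  have b1 : M * S.card ≤ M * m + M * (M + 2) * m + M * t + M + (m + 1) * (M ^ 2 + 2 * M + 1) := by
    rw [← hQM, ← a2]
    nlinarith
  refine b1.trans ?_
  nlinarith [Nat.mul_le_mul hMpos (le_refl m)]

end

/-! ### Character sums over extensions of even degree -/

section

open Polynomial

theorem mulChar_norm_le_one {F : Type*} [Field F] [Finite F] (χ : MulChar F ℂ) (x : F) :
    ‖χ x‖ ≤ 1 := by
  by_cases hx : x = 0
  · rw [hx, MulChar.map_zero]; simp
  · have : Fintype F := Fintype.ofFinite F
    have h : χ x ^ (Fintype.card F - 1) = 1 := by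
      rw [← map_pow, FiniteField.pow_card_sub_one_eq_one x hx, map_one]
    refine (Complex.norm_eq_one_of_pow_eq_one h ?_).le
    have := Fintype.one_lt_card (α := F)
    lia

/-- A character of order dividing `d` factors through the `t`-th power map, where `dt = |Kˣ|`. -/
theorem mulChar_eq_of_pow_eq {K : Type*} [Field K] [Fintype K] {d t : ℕ}
    (hd : 0 < d) (hcard : Fintype.card K = d * t + 1) {η : MulChar K ℂ} (hη : η ^ d = 1)
    {u v : K} (hu : u ≠ 0) (hv : v ≠ 0) (h : u ^ t = v ^ t) : η u = η v := by
  obtain ⟨g, hg⟩ := IsCyclic.exists_generator (α := Kˣ)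
  have hord : orderOf g = d * t := by
    rw [orderOf_eq_card_of_forall_mem_zpowers hg, Nat.card_units, Nat.card_eq_fintype_card, hcard,
      Nat.add_sub_cancel]
  have htpos : 0 < t := by
    have := Fintype.one_lt_card (α := K)
    rcases Nat.eq_zero_or_pos t with rfl | h
    · simp at hcard; lia
    · exact h
  obtain ⟨k, hk⟩ := hg (Units.mk0 (u / v) (div_ne_zero hu hv))
  have hk : g ^ k = Units.mk0 (u / v) (div_ne_zero hu hv) := hk
  have h1 : g ^ (k * t) = 1 := by
    rw [zpow_mul, hk, zpow_natCast]
    ext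
    simp only [Units.val_pow_eq_pow_val, Units.val_mk0, Units.val_one]
    rw [div_pow, h, div_self (pow_ne_zero _ hv)]
  rw [← orderOf_dvd_iff_zpow_eq_one, hord] at h1
  push_cast at h1
  obtain ⟨j, rfl⟩ := (mul_dvd_mul_iff_right (by exact_mod_cast htpos.ne')).mp h1
  have h2 : u / v = ((g ^ j : Kˣ) : K) ^ d := by
    have : u / v = ((g ^ ((d : ℤ) * j) : Kˣ) : K) := by rw [hk]; simp
    rw [this, mul_comm, zpow_mul, zpow_natCast, Units.val_pow_eq_pow_val]
  have h3 : η (u / v) = 1 := by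
    rw [h2, map_pow, ← MulChar.pow_apply' _ hd.ne', hη, MulChar.one_apply_coe]
  calc η u = η (u / v * v) := by rw [div_mul_cancel₀ _ hv]
    _ = η v := by rw [map_mul, h3, one_mul]

theorem card_filter_pow_eq {K : Type*} [Field K] [Fintype K] [DecidableEq K] {d t : ℕ}
    (hcard : Fintype.card K = d * t + 1) {v : K} (hv : v ≠ 0) :
    (Finset.univ.filter fun u : K => v ^ t = u ^ t).card = t := by
  have h1 : 0 < d * t := by have := Fintype.one_lt_card (α := K); lia
  obtain ⟨g, hg⟩ := IsCyclic.exists_ofOrder_eq_natCard (α := Kˣ)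
  have hp : IsPrimitiveRoot (g : K) (d * t) := by
    have := IsPrimitiveRoot.orderOf g
    rw [hg, Nat.card_units, Nat.card_eq_fintype_card, hcard, Nat.add_sub_cancel] at this
    exact IsPrimitiveRoot.coe_units_iff.mpr this
  have htpos : 0 < t := Nat.pos_of_mul_pos_left h1 |> fun h => by
    rcases Nat.eq_zero_or_pos t with rfl | h
    · simp at h1
    · exact h
  have hp2 : IsPrimitiveRoot ((g : K) ^ d) t := hp.pow h1 rfl
  have := hp2.card_nthRoots (v ^ t)
  rw [if_pos ⟨v, rfl⟩] at this
  conv_rhs => rw [← this]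
  rw [← Multiset.toFinset_card_of_nodup (hp2.nthRoots_nodup (pow_ne_zero _ hv))]
  congr 1
  ext u
  simp [mem_nthRoots htpos, eq_comm]

/-- One-sided estimates for the fibres of `x ↦ y(x) ^ t` bound the character sum of `y`,
because the character values add up to zero. -/
theorem charSum_le_of_fibre_le {K : Type*} [Field K] [Fintype K] [DecidableEq K] {d t E : ℕ}
    (hd : 0 < d) (hcard : Fintype.card K = d * t + 1) {η : MulChar K ℂ} (hη : η ^ d = 1)
    (hη1 : η ≠ 1) (y : K → K)
    (hE : ∀ u : K, u ≠ 0 → (Finset.univ.filter fun x => y x ^ t = u ^ t ∧ y x ≠ 0).card ≤ E) :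
    ‖∑ x, η (y x)‖ ≤ d * E - ((Finset.univ.filter fun x => y x ≠ 0).card : ℝ) := by
  have htpos : 0 < t := by
    have := Fintype.one_lt_card (α := K)
    rcases Nat.eq_zero_or_pos t with rfl | h
    · simp at hcard; lia
    · exact h
  set N : K → ℕ := fun u => (Finset.univ.filter fun x => y x ^ t = u ^ t ∧ y x ≠ 0).card with hN
  have key (w : K → ℂ) : ∑ u ∈ Finset.univ.erase (0:K), w u * N u =
      ∑ x ∈ Finset.univ.filter (fun x => y x ≠ 0),
        ∑ u ∈ Finset.univ.filter (fun u => y x ^ t = u ^ t), w u := by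
    simp only [hN, Finset.card_eq_sum_ones, Nat.cast_sum, Finset.mul_sum, Nat.cast_one, mul_one]
    rw [Finset.sum_comm' (t' := Finset.univ.filter (fun x => y x ≠ 0))
      (s' := fun x => Finset.univ.filter (fun u => y x ^ t = u ^ t))]
    intro u x
    simp only [Finset.mem_erase, Finset.mem_univ, and_true, Finset.mem_filter, true_and, ne_eq]
    constructor
    · rintro ⟨_, h1, h2⟩; exact ⟨h1, h2⟩
    · rintro ⟨h1, h2⟩
      refine ⟨?_, h1, h2⟩
      rintro rfl
      rw [zero_pow htpos.ne'] at h1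
      exact h2 (pow_eq_zero_iff htpos.ne' |>.mp h1)
  have k1 : ∑ u ∈ Finset.univ.erase (0:K), η u * N u = t * ∑ x, η (y x) := by
    rw [key, Finset.mul_sum, Finset.sum_filter]
    refine Finset.sum_congr rfl fun x _ => ?_
    split_ifs with hx
    · rw [Finset.sum_congr rfl (g := fun _ => η (y x)), Finset.sum_const,
        card_filter_pow_eq hcard hx, nsmul_eq_mul]
      intro u hu
      have hu' : y x ^ t = u ^ t := by simpa using hu
      refine (mulChar_eq_of_pow_eq hd hcard hη hx ?_ hu').symm
      rintro rfl
      rw [zero_pow htpos.ne'] at hu'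
      exact hx (pow_eq_zero_iff htpos.ne' |>.mp hu')
    · rw [not_not.mp hx, MulChar.map_zero, mul_zero]
  have k2 : ∑ u ∈ Finset.univ.erase (0:K), (N u : ℂ) =
      t * (Finset.univ.filter fun x => y x ≠ 0).card := by
    have := key (fun _ => 1)
    simp only [one_mul] at this
    rw [this, Finset.sum_congr rfl (g := fun _ => (t : ℂ)), Finset.sum_const, nsmul_eq_mul,
      mul_comm]
    intro x hx
    rw [Finset.sum_const, card_filter_pow_eq hcard (by simpa using hx)]; simp
  have k2' : ∑ u ∈ Finset.univ.erase (0:K), (N u : ℝ) =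
      t * (Finset.univ.filter fun x => y x ≠ 0).card := by exact_mod_cast k2
  have k3 : ∑ u ∈ Finset.univ.erase (0:K), η u = 0 := by
    rw [← MulChar.sum_eq_zero_of_ne_one hη1, ← Finset.add_sum_erase _ _ (Finset.mem_univ (0:K)),
      MulChar.map_zero, zero_add]
  -- subtracting the constant `E` from the fibre sizes makes all weights of one sign
  have k4 : (t : ℂ) * ∑ x, η (y x) = - ∑ u ∈ Finset.univ.erase (0:K), η u * ((E - N u : ℝ) : ℂ) := by
    rw [← k1]
    push_cast
    simp only [mul_sub, Finset.sum_sub_distrib, ← Finset.sum_mul, k3]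
    ring
  have k5 : t * ‖∑ x, η (y x)‖ ≤ t * (d * E - ((Finset.univ.filter fun x => y x ≠ 0).card : ℝ)) := by
    have : ‖(t : ℂ) * ∑ x, η (y x)‖ = t * ‖∑ x, η (y x)‖ := by simp
    rw [← this, k4, norm_neg]
    calc ‖∑ u ∈ Finset.univ.erase (0:K), η u * ((E - N u : ℝ) : ℂ)‖
        ≤ ∑ u ∈ Finset.univ.erase (0:K), ((E : ℝ) - N u) := by
          refine (norm_sum_le _ _).trans (Finset.sum_le_sum fun u hu => ?_)
          have h0 : (0:ℝ) ≤ E - N u := by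
            rw [sub_nonneg]; exact_mod_cast hE u (Finset.ne_of_mem_erase hu)
          rw [norm_mul, Complex.norm_real, Real.norm_of_nonneg h0]
          exact mul_le_of_le_one_left h0 (mulChar_norm_le_one _ _)
      _ = _ := by
          rw [Finset.sum_sub_distrib, k2', Finset.sum_const,
            Finset.card_erase_of_mem (Finset.mem_univ _), Finset.card_univ, hcard,
            Nat.add_sub_cancel, nsmul_eq_mul]
          push_cast; ring
  exact le_of_mul_le_mul_left k5 (by exact_mod_cast htpos)

/-- The character `χ ∘ N` of an extension `K` of `F`. -/
noncomputable def normChar {F : Type*} (K : Type*) [Field F] [Field K] [Algebra F K]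
    (χ : MulChar F ℂ) : MulChar K ℂ :=
  MulChar.ofUnitHom (χ.toUnitHom.comp (Units.map (Algebra.norm F)))

theorem normChar_apply {F K : Type*} [Field F] [Field K] [Finite F] [Algebra F K] [Finite K]
    (χ : MulChar F ℂ) (x : K) : normChar K χ x = χ (Algebra.norm F x) := by
  by_cases hx : x = 0
  · have : Module.Finite F K := Module.Finite.of_finite
    rw [hx, MulChar.map_zero, Algebra.norm_zero, MulChar.map_zero]
  · have := MulChar.ofUnitHom_coe (χ.toUnitHom.comp (Units.map (Algebra.norm F))) (Units.mk0 x hx)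
    simpa [normChar] using this

/-- Square-root cancellation over extensions of even degree `2k`, with a constant independent of `k`.
The even degree makes the cardinality a square, as `stepanov` requires. -/
theorem charSum_le {F : Type} [Field F] [Fintype F] (χ : MulChar F ℂ) (hχ : χ ≠ 1) {f : F[X]}
    (hf : f ≠ 0) (hm : 0 < f.natDegree)
    (hmul : ∀ ℓ : ℕ, ℓ.Prime → ℓ ∣ orderOf χ → ∃ p : F, ¬ ℓ ∣ f.rootMultiplicity p) :
    ∃ (C : ℝ) (k₀ : ℕ), ∀ k ≥ k₀, ∀ (K : Type) [Field K] [Fintype K] [Algebra F K],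
      Fintype.card K = Fintype.card F ^ (2 * k) →
      ‖∑ x : K, χ (Algebra.norm F (aeval x f))‖ ≤ C * (Fintype.card F : ℝ) ^ k := by
  classical
  set q := Fintype.card F with hq
  have hq1 : 1 < q := Fintype.one_lt_card
  set d := orderOf χ with hd
  set m := f.natDegree with hmd
  have hdpos : 0 < d := orderOf_pos χ
  have hdq : d ∣ q - 1 := by
    refine orderOf_dvd_of_pow_eq_one ?_
    have := MulChar.pow_card_eq_one χ
    rwa [Fintype.card_units] at this
  refine ⟨m + d * (6 * m + 4), d * (m * (m + 2)) + 1, fun k hk K _ _ _ hK => ?_⟩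
  obtain ⟨L, hL⟩ : d ∣ q ^ k - 1 := hdq.trans (by simpa using Nat.sub_dvd_pow_sub_pow q 1 k)
  have hqk : k < q ^ k := Nat.lt_pow_self hq1
  have hL' : q ^ k = d * L + 1 := by lia
  have hLm : m * (m + 2) ≤ L := by
    refine Nat.le_of_mul_le_mul_left (?_ : d * _ ≤ d * _) hdpos
    lia
  have hcard : Fintype.card K = (d * L + 1) ^ 2 := by rw [hK, ← hL', ← pow_mul, mul_comm]
  have hinj := (algebraMap F K).injective
  set g : K[X] := f.map (algebraMap F K) with hg
  have hgm : g.natDegree = m := natDegree_map _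
  have hg0 : g ≠ 0 := by rwa [hg, Polynomial.map_ne_zero_iff hinj]
  have hE := fun u : K => stepanov hdpos hcard (f := g) hg0 (by rwa [hgm])
    (fun ℓ h1 h2 => by
      obtain ⟨p, hp⟩ := hmul ℓ h1 h2
      exact ⟨algebraMap F K p, by rwa [hg, ← eq_rootMultiplicity_map hinj]⟩)
    (by rwa [hgm]) (u ^ (L * (d * L + 2)))
    (Finset.univ.filter fun x => g.eval x ^ (L * (d * L + 2)) = u ^ (L * (d * L + 2)) ∧
      g.eval x ≠ 0) (fun x hx => by simpa using hx)
  have h1 : normChar K χ ≠ 1 := by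
    intro h
    apply hχ
    ext a
    obtain ⟨b, hb⟩ := FiniteField.norm_surjective F K a
    have : normChar K χ b = χ a := by rw [normChar_apply, hb]
    rw [← this, h, MulChar.one_apply_coe, MulChar.one_apply]
    rw [isUnit_iff_ne_zero]
    rintro rfl
    have : Module.Finite F K := Module.Finite.of_finite
    rw [Algebra.norm_zero] at hb
    exact a.ne_zero hb.symm
  have h2 : normChar K χ ^ d = 1 := by
    ext a
    rw [MulChar.pow_apply' _ hdpos.ne', normChar_apply, MulChar.one_apply_coe,
      ← MulChar.pow_apply' _ hdpos.ne', hd, pow_orderOf_eq_one, MulChar.one_apply]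
    exact (a.isUnit.map (Algebra.norm F))
  have h3 := charSum_le_of_fibre_le (t := L * (d * L + 2)) hdpos (by rw [hcard]; ring) h2 h1
    (fun x => g.eval x) (fun u _ => hE u)
  have h4 : ∑ x : K, χ (Algebra.norm F (aeval x f)) = ∑ x : K, normChar K χ (g.eval x) := by
    refine Finset.sum_congr rfl fun x _ => ?_
    rw [normChar_apply, hg, eval_map_algebraMap]
  rw [h4]
  refine h3.trans ?_
  have h5 : Fintype.card K ≤ (Finset.univ.filter fun x => g.eval x ≠ 0).card + m := by
    have := Finset.card_filter_add_card_filter_not (s := (Finset.univ : Finset K))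
      (fun x => g.eval x ≠ 0)
    have h6 : (Finset.univ.filter fun x => ¬ g.eval x ≠ 0).card ≤ m := by
      rw [← hgm]
      refine le_trans (Finset.card_le_card (t := g.roots.toFinset) fun x hx => ?_)
        ((Multiset.toFinset_card_le _).trans (card_roots' g))
      simpa [hg0] using hx
    rw [Finset.card_univ] at this
    lia
  rw [hcard] at h5
  have h5' : ((d * L + 1 : ℝ)) ^ 2 ≤ ((Finset.univ.filter fun x => g.eval x ≠ 0).card : ℝ) + m := by
    exact_mod_cast h5
  have h6 : (q : ℝ) ^ k = d * L + 1 := by exact_mod_cast hL'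
  rw [h6, hgm]
  push_cast
  have h7 : (0:ℝ) ≤ m * (d * L) := by positivity
  nlinarith

end

/-! ### Power sums and the size of reciprocal roots -/

section

open Polynomial

/-- If the power sums of a multiset of complex numbers are `O(R ^ k)`, every member has absolute
value at most `R`: a polynomial that vanishes at all other members isolates its powers. -/
theorem norm_le_of_powerSum_le (s : Multiset ℂ) {R C : ℝ} (hR : 0 < R) {k₀ : ℕ}
    (h : ∀ k ≥ k₀, ‖(s.map fun x => x ^ k).sum‖ ≤ C * R ^ k) : ∀ β ∈ s, ‖β‖ ≤ R := by
  classical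
  intro β hβ
  set p : ℂ[X] := ∏ c ∈ s.toFinset.erase β, (X - Polynomial.C c) with hp
  have hpβ : p.eval β ≠ 0 := by
    rw [hp, eval_prod, Finset.prod_ne_zero_iff]
    intro c hc
    simpa [sub_eq_zero, eq_comm] using Finset.ne_of_mem_erase hc
  have hpc : ∀ c ∈ s.toFinset, c ≠ β → p.eval c = 0 := by
    intro c hc hcβ
    rw [hp, eval_prod]
    exact Finset.prod_eq_zero (Finset.mem_erase.mpr ⟨hcβ, hc⟩) (by simp)
  have hC : 0 ≤ C := by
    have := (norm_nonneg _).trans (h k₀ le_rfl)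
    exact nonneg_of_mul_nonneg_left this (pow_pos hR _)
  have h1 (k : ℕ) : (s.count β : ℂ) * (β ^ k * p.eval β) =
      ∑ i ∈ Finset.range (p.natDegree + 1), p.coeff i * (s.map fun x => x ^ (k + i)).sum := by
    have : (s.map fun x => x ^ k * p.eval x).sum = (s.count β : ℂ) * (β ^ k * p.eval β) := by
      rw [Finset.sum_multiset_map_count, Finset.sum_eq_single β]
      · rw [nsmul_eq_mul]
      · intro c hc hcβ; rw [hpc c hc hcβ]; simp
      · intro hb; exact absurd (Multiset.mem_toFinset.mpr hβ) hb
    rw [← this]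
    simp_rw [← Multiset.sum_map_mul_left]
    rw [← Multiset.sum_map_sum]
    congr 1
    refine Multiset.map_congr rfl fun x _ => ?_
    rw [eval_eq_sum_range, Finset.mul_sum]
    refine Finset.sum_congr rfl fun i _ => ?_
    rw [pow_add]; ring
  set B : ℝ := ∑ i ∈ Finset.range (p.natDegree + 1), ‖p.coeff i‖ * (C * R ^ i) with hB
  have hcnt : (1 : ℝ) ≤ s.count β := by
    exact_mod_cast Multiset.one_le_count_iff_mem.mpr hβ
  have h2 : ∀ k ≥ k₀, ‖β‖ ^ k * ‖p.eval β‖ ≤ B * R ^ k := by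
    intro k hk
    calc ‖β‖ ^ k * ‖p.eval β‖ ≤ s.count β * (‖β‖ ^ k * ‖p.eval β‖) :=
          le_mul_of_one_le_left (by positivity) hcnt
      _ = ‖(s.count β : ℂ) * (β ^ k * p.eval β)‖ := by simp
      _ ≤ _ := by
        rw [h1, hB, Finset.sum_mul]
        refine (norm_sum_le _ _).trans (Finset.sum_le_sum fun i _ => ?_)
        rw [norm_mul, mul_assoc]
        refine mul_le_mul_of_nonneg_left ((h _ (by lia)).trans_eq ?_) (norm_nonneg _)
        rw [pow_add]; ring
  by_contra hlt
  push Not at hlt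
  have h3 : 1 < ‖β‖ / R := (one_lt_div hR).mpr hlt
  have hpos : 0 < ‖p.eval β‖ := norm_pos_iff.mpr hpβ
  obtain ⟨n, hn⟩ := pow_unbounded_of_one_lt (B / ‖p.eval β‖) h3
  have h4 := h2 (n + k₀) (by lia)
  have h5 : B / ‖p.eval β‖ < (‖β‖ / R) ^ (n + k₀) :=
    hn.trans_le (pow_le_pow_right₀ h3.le (by lia))
  rw [div_pow, div_lt_div_iff₀ hpos (by positivity)] at h5
  linarith

/-- A sequence satisfying Newton's identities with respect to a sequence of power sums of
square-root size has its first term bounded accordingly. -/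
theorem newton_bound {A S : ℕ → ℂ} {D : ℕ} (hA0 : A 0 = 1) (hAD : ∀ n, D < n → A n = 0)
    (hN : ∀ N : ℕ, 1 ≤ N → (N : ℂ) * A N = ∑ j ∈ Finset.Icc 1 N, S j * A (N - j))
    {q C : ℝ} (hq : 0 < q) {k₀ : ℕ} (hS : ∀ k ≥ k₀, ‖S (2 * k)‖ ≤ C * q ^ k) :
    ‖A 1‖ ≤ D * √q := by
  classical
  set P : ℂ[X] := ∑ i ∈ Finset.range (D + 1), Polynomial.C (A i) * X ^ (D - i) with hP
  have hPc (i : ℕ) (hi : i ≤ D) : P.coeff (D - i) = A i := by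
    rw [hP, finsetSum_coeff, Finset.sum_eq_single i]
    · simp
    · intro b hb hbi
      rw [Finset.mem_range] at hb
      rw [coeff_C_mul_X_pow, if_neg (by lia)]
    · intro h; exact absurd (Finset.mem_range.mpr (by lia)) h
  have hPle : P.natDegree ≤ D := by
    refine natDegree_sum_le_of_forall_le _ _ fun i _ => (natDegree_C_mul_X_pow_le _ _).trans (by lia)
  have hPD : P.coeff D = 1 := by simpa [hA0] using hPc 0 (by lia)
  have hPmon : P.Monic := monic_of_natDegree_le_of_coeff_eq_one D hPle hPD
  have hPdeg : P.natDegree = D := natDegree_eq_of_le_of_coeff_ne_zero hPle (by rw [hPD]; simp)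
  have hcard : P.roots.card = P.natDegree := splits_iff_card_roots.mp (IsAlgClosed.splits P)
  set s := P.roots with hs
  have hAe (n : ℕ) : A n = (-1) ^ n * s.esymm n := by
    by_cases hn : n ≤ D
    · rw [← hPc n hn, coeff_eq_esymm_roots_of_card hcard (by lia), hPmon.leadingCoeff, hPdeg, one_mul,
        Nat.sub_sub_self hn]
    · rw [hAD n (by lia), Multiset.esymm, Multiset.powersetCard_eq_empty]
      · simp
      · rw [hcard, hPdeg]; lia
  obtain ⟨l, b, hb⟩ : ∃ (l : ℕ) (b : Fin l → ℂ), Finset.univ.val.map b = s := by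
    refine ⟨_, s.toList.get, ?_⟩
    rw [Fin.univ_val_map, List.ofFn_get, Multiset.coe_toList]
  set p : ℕ → ℂ := fun j => (s.map fun x => x ^ j).sum with hpdef
  have hp : ∀ N : ℕ, 1 ≤ N → (N : ℂ) * A N = - ∑ j ∈ Finset.Icc 1 N, p j * A (N - j) := by
    intro N hN
    have h1 := congrArg (MvPolynomial.aeval b) (MvPolynomial.mul_esymm_eq_sum (Fin l) ℂ N)
    have h2 : ∀ n, MvPolynomial.aeval b (MvPolynomial.psum (Fin l) ℂ n) = p n := by
      intro n
      simp only [MvPolynomial.psum, map_sum, map_pow, MvPolynomial.aeval_X, hpdef]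
      conv_rhs => rw [← hb]
      rw [Multiset.map_map]; rfl
    simp only [map_mul, map_natCast, map_pow, map_neg, map_one, map_sum, h2,
      MvPolynomial.aeval_esymm_eq_multiset_esymm, hb] at h1
    rw [hAe N, mul_left_comm, h1, ← mul_assoc, ← pow_add]
    have h3 : (-1 : ℂ) ^ (N + (N + 1)) = -1 := Odd.neg_one_pow ⟨N, by ring⟩
    rw [h3, neg_one_mul]
    congr 1
    refine Finset.sum_bij' (fun a _ => a.2) (fun j _ => (N - j, j)) ?_ ?_ ?_ ?_ ?_
    · rintro ⟨x, y⟩ h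
      simp only [Finset.mem_filter, Finset.HasAntidiagonal.mem_antidiagonal, Finset.mem_Icc] at h ⊢
      lia
    · intro j h
      simp only [Finset.mem_filter, Finset.HasAntidiagonal.mem_antidiagonal, Finset.mem_Icc] at h ⊢
      lia
    · rintro ⟨x, y⟩ h
      simp only [Finset.mem_filter, Finset.HasAntidiagonal.mem_antidiagonal] at h
      simp only [Prod.mk.injEq, and_true]; lia
    · intro j h; rfl
    · rintro ⟨x, y⟩ h
      simp only [Finset.mem_filter, Finset.HasAntidiagonal.mem_antidiagonal] at h
      have : N - y = x := by lia
      simp only [this, hAe x]; ring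
  have hSp : ∀ j, 1 ≤ j → S j = - p j := by
    intro j
    induction j using Nat.strong_induction_on with
    | _ j ih =>
      intro hj
      obtain ⟨j, rfl⟩ : ∃ i, j = i + 1 := ⟨j - 1, by lia⟩
      have h1 := (hN _ hj).symm.trans (hp _ hj)
      rw [Finset.sum_Icc_succ_top (by lia), Finset.sum_Icc_succ_top (by lia), Nat.sub_self, hA0,
        neg_add, ← Finset.sum_neg_distrib] at h1
      rw [Finset.sum_congr rfl (g := fun i => -(p i * A (j + 1 - i)))] at h1
      · simpa using h1
      · intro i hi
        rw [Finset.mem_Icc] at hi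
        rw [ih i (by lia) hi.1]; ring
  have hroot : ∀ β ∈ s, ‖β‖ ≤ √q := by
    intro β hβ
    have := norm_le_of_powerSum_le (s.map fun x => x ^ 2) (R := q) (C := C) (k₀ := k₀ + 1) hq
      (fun k hk => by
        have h1 := hS k (by lia)
        rw [hSp _ (by lia), norm_neg] at h1
        simpa only [Multiset.map_map, hpdef, Function.comp_def, pow_mul] using h1) (β ^ 2) (Multiset.mem_map_of_mem _ hβ)
    rw [norm_pow] at this
    exact Real.le_sqrt_of_sq_le this
  have hA1 : A 1 = - p 1 := by
    have := hp 1 le_rfl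
    simpa [hA0] using this
  rw [hA1, norm_neg, hpdef]
  simp only [pow_one, Multiset.map_id']
  have h1 : ‖s.sum‖ ≤ (s.map fun x => ‖x‖).sum := norm_multiset_sum_le s
  refine h1.trans ((Multiset.sum_le_card_nsmul _ (√q) ?_).trans ?_)
  · intro x hx
    obtain ⟨β, hβ, rfl⟩ := Multiset.mem_map.mp hx
    exact hroot β hβ
  · rw [Multiset.card_map, hcard, hPdeg, nsmul_eq_mul]

end

/-! ### The Euler product over monic irreducible polynomials -/

section

open Polynomial

/-- The monic polynomials of degree `n` over a finite field. -/
noncomputable def monicOf (F : Type*) [Field F] [Fintype F] (n : ℕ) : Finset F[X] :=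
  open Classical in
  Finset.univ.image fun v : Fin n → F => X ^ n + ∑ i : Fin n, C (v i) * X ^ (i : ℕ)

/-- The monic irreducible polynomials of degree `n` over a finite field. -/
noncomputable def irrOf (F : Type*) [Field F] [Fintype F] (n : ℕ) : Finset F[X] :=
  open Classical in (monicOf F n).filter Irreducible

section
variable {F : Type*} [Field F] [Fintype F]

theorem mem_monicOf {n : ℕ} {g : F[X]} : g ∈ monicOf F n ↔ g.Monic ∧ g.natDegree = n := by
  classical
  simp only [monicOf, Finset.mem_image, Finset.mem_univ, true_and]
  constructor
  · rintro ⟨v, rfl⟩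
    have h : (∑ i : Fin n, C (v i) * X ^ (i : ℕ)).degree < (n : WithBot ℕ) := degree_sum_fin_lt v
    exact ⟨monic_X_pow_add h, by
      rw [natDegree_add_eq_left_of_degree_lt (by rwa [degree_X_pow]), natDegree_X_pow]⟩
  · rintro ⟨h1, rfl⟩
    refine ⟨fun i => g.coeff i, ?_⟩
    conv_rhs => rw [h1.as_sum]
    rw [Finset.sum_range]

theorem mem_irrOf {n : ℕ} {g : F[X]} :
    g ∈ irrOf F n ↔ (g.Monic ∧ g.natDegree = n) ∧ Irreducible g := by
  simp [irrOf, mem_monicOf]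

/-- The degree of a monic polynomial, counted by its monic prime-power divisors. -/
theorem degree_eq_sum_primePow (g : F[X]) {N : ℕ} (hg : g ∈ monicOf F N) (w : F[X] → ℕ → Prop)
    [∀ P k, Decidable (w P k)] (hw : ∀ P k, w P k ↔ P ^ k ∣ g) :
    N = ∑ d ∈ Finset.Icc 1 N, ∑ P ∈ irrOf F d, ∑ k ∈ Finset.Icc 1 N, if w P k then d else 0 := by
  classical
  obtain ⟨hm, hN⟩ := mem_monicOf.mp hg
  have hg0 := hm.ne_zero
  set nf := UniqueFactorizationMonoid.normalizedFactors g with hnf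
  have hnfm : ∀ P ∈ nf, P.Monic ∧ Irreducible P ∧ P ∣ g := by
    intro P hP
    obtain ⟨h1, h2, h3⟩ := (Polynomial.mem_normalizedFactors_iff hg0).mp hP
    exact ⟨h2, h1, h3⟩
  have hprod : nf.prod = g := by
    rw [hnf, UniqueFactorizationMonoid.prod_normalizedFactors_eq hg0]
    exact hm.normalize_eq_self
  have hdeg : N = (nf.map natDegree).sum := by
    rw [← hN, ← hprod]
    exact natDegree_multiset_prod_of_monic _ fun P hP => (hnfm P hP).1
  have hcount : ∀ d, ∀ P ∈ irrOf F d, (Finset.Icc 1 N).filter (fun k => w P k) =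
      Finset.Icc 1 (nf.count P) := by
    intro d P hP
    obtain ⟨⟨h1, h2⟩, h3⟩ := mem_irrOf.mp hP
    have h4 := UniqueFactorizationMonoid.emultiplicity_eq_count_normalizedFactors h3 hg0
    rw [h1.normalize_eq_self] at h4
    ext k
    have h5 : w P k ↔ k ≤ nf.count P := by
      rw [hw, pow_dvd_iff_le_emultiplicity, h4]; exact_mod_cast Iff.rfl
    simp only [Finset.mem_filter, Finset.mem_Icc, h5]
    have h6 : k ≤ nf.count P → k ≤ N := by
      intro hk
      have := natDegree_le_of_dvd ((hw P k).mp (h5.mpr hk)) hg0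
      rw [natDegree_pow, hN] at this
      exact (Nat.le_mul_of_pos_right _ h3.natDegree_pos).trans this
    tauto
  calc N = ∑ P ∈ nf.toFinset, nf.count P * P.natDegree := by
        conv_lhs => rw [hdeg, Finset.sum_multiset_map_count]
        simp
    _ = ∑ d ∈ Finset.Icc 1 N, ∑ P ∈ nf.toFinset with P.natDegree = d,
          nf.count P * P.natDegree := by
        refine (Finset.sum_fiberwise_of_maps_to (fun P hP => ?_) _).symm
        obtain ⟨h1, h2, h3⟩ := hnfm P (Multiset.mem_toFinset.mp hP)
        rw [Finset.mem_Icc, ← hN]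
        exact ⟨h2.natDegree_pos, natDegree_le_of_dvd h3 hg0⟩
    _ = _ := by
        refine Finset.sum_congr rfl fun d _ => ?_
        rw [Finset.sum_subset (s₂ := irrOf F d)]
        · refine Finset.sum_congr rfl fun P hP => ?_
          rw [← Finset.sum_filter, hcount d P hP, Finset.sum_const,
            (mem_irrOf.mp hP).1.2]
          simp
        · intro P hP
          rw [Finset.mem_filter, Multiset.mem_toFinset] at hP
          obtain ⟨h1, h2, h3⟩ := hnfm P hP.1
          exact mem_irrOf.mpr ⟨⟨h1, hP.2⟩, h2⟩
        · intro P hP hP2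
          rw [Finset.mem_filter, Multiset.mem_toFinset, not_and] at hP2
          have : P ∉ nf := fun h => hP2 h (mem_irrOf.mp hP).1.2
          rw [Multiset.count_eq_zero_of_notMem this, zero_mul]

/-- The logarithmic derivative of the Euler product `∑ Λ(g) T ^ deg g = ∏ (1 - Λ(P) T ^ deg P)⁻¹`,
read off coefficientwise. -/
theorem logDeriv_eulerProduct (Λ : F[X] →* ℂ) (N : ℕ) :
    (N : ℂ) * ∑ g ∈ monicOf F N, Λ g = ∑ j ∈ Finset.Icc 1 N,
      (∑ d ∈ j.divisors, ∑ P ∈ irrOf F d, (d : ℂ) * Λ P ^ (j / d)) *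
        ∑ g ∈ monicOf F (N - j), Λ g := by
  classical
  have h1 : (N : ℂ) * ∑ g ∈ monicOf F N, Λ g = ∑ d ∈ Finset.Icc 1 N, ∑ k ∈ Finset.Icc 1 N,
      ∑ P ∈ irrOf F d, ∑ g ∈ monicOf F N, if P ^ k ∣ g then (d : ℂ) * Λ g else 0 := by
    have : ∀ g ∈ monicOf F N, (N : ℂ) * Λ g = ∑ d ∈ Finset.Icc 1 N, ∑ P ∈ irrOf F d,
        ∑ k ∈ Finset.Icc 1 N, if P ^ k ∣ g then (d : ℂ) * Λ g else 0 := by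
      intro g hg
      conv_lhs => rw [degree_eq_sum_primePow g hg (fun P k => P ^ k ∣ g) (fun _ _ => Iff.rfl)]
      simp only [Nat.cast_sum, Finset.sum_mul, Nat.cast_ite, Nat.cast_zero, ite_mul, zero_mul]
    rw [Finset.mul_sum, Finset.sum_congr rfl this, Finset.sum_comm]
    refine Finset.sum_congr rfl fun d _ => ?_
    rw [Finset.sum_comm]
    simp only [Finset.sum_comm (s := monicOf F N)]
    rw [Finset.sum_comm]
  have h2 : ∀ d ∈ Finset.Icc 1 N, ∀ k ∈ Finset.Icc 1 N, ∀ P ∈ irrOf F d,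
      (∑ g ∈ monicOf F N, if P ^ k ∣ g then (d : ℂ) * Λ g else 0) =
      if d * k ≤ N then (d : ℂ) * Λ P ^ k * ∑ g ∈ monicOf F (N - d * k), Λ g else 0 := by
    intro d _ k _ P hP
    obtain ⟨⟨hPm, hPd⟩, hPi⟩ := mem_irrOf.mp hP
    have hPk : (P ^ k).natDegree = d * k := by rw [natDegree_pow, hPd, mul_comm]
    rw [← Finset.sum_filter]
    split_ifs with hdk
    · rw [Finset.mul_sum]
      refine (Finset.sum_bij (fun g _ => P ^ k * g) ?_ ?_ ?_ ?_).symm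
      · intro g hg
        obtain ⟨h3, h4⟩ := mem_monicOf.mp hg
        rw [Finset.mem_filter, mem_monicOf]
        refine ⟨⟨(hPm.pow k).mul h3, ?_⟩, dvd_mul_right _ _⟩
        rw [(hPm.pow k).natDegree_mul h3, hPk, h4]; lia
      · intro g _ g' _ h
        exact mul_left_cancel₀ (hPm.pow k).ne_zero h
      · intro g hg
        rw [Finset.mem_filter, mem_monicOf] at hg
        obtain ⟨⟨h3, h4⟩, g', rfl⟩ := hg
        have h5 := (hPm.pow k).of_mul_monic_left h3
        refine ⟨g', mem_monicOf.mpr ⟨h5, ?_⟩, rfl⟩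
        rw [(hPm.pow k).natDegree_mul h5, hPk] at h4
        lia
      · intro g _
        rw [map_mul, map_pow, mul_assoc]
    · refine Finset.sum_eq_zero fun g hg => ?_
      rw [Finset.mem_filter, mem_monicOf] at hg
      have := natDegree_le_of_dvd hg.2 hg.1.1.ne_zero
      rw [hPk, hg.1.2] at this
      exact absurd this hdk
  rw [h1, Finset.sum_congr rfl fun d hd => Finset.sum_congr rfl fun k hk =>
    Finset.sum_congr rfl (h2 d hd k hk)]
  set G : ℕ → ℕ → ℂ := fun d k => ∑ P ∈ irrOf F d,
    (d : ℂ) * Λ P ^ k * ∑ g ∈ monicOf F (N - d * k), Λ g with hG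
  have h3 : ∀ d k, (∑ P ∈ irrOf F d, if d * k ≤ N then
      (d : ℂ) * Λ P ^ k * ∑ g ∈ monicOf F (N - d * k), Λ g else 0) =
      if d * k ≤ N then G d k else 0 := by
    intro d k
    split_ifs <;> simp [hG]
  have h4 : ∀ j ∈ Finset.Icc 1 N, (∑ d ∈ j.divisors, ∑ P ∈ irrOf F d, (d : ℂ) * Λ P ^ (j / d)) *
      ∑ g ∈ monicOf F (N - j), Λ g = ∑ d ∈ j.divisors, G d (j / d) := by
    intro j _
    rw [Finset.sum_mul]
    refine Finset.sum_congr rfl fun d hd => ?_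
    simp only [hG]
    rw [Finset.sum_mul, Nat.mul_div_cancel' (Nat.dvd_of_mem_divisors hd)]
  simp only [h3]
  rw [Finset.sum_congr rfl h4, ← Finset.sum_product (s := Finset.Icc 1 N) (t := Finset.Icc 1 N)
    (f := fun dk => if dk.1 * dk.2 ≤ N then G dk.1 dk.2 else 0), ← Finset.sum_filter]
  have h5 : ∑ j ∈ Finset.Icc 1 N, ∑ d ∈ j.divisors, G d (j / d) =
      ∑ jd ∈ (Finset.Icc 1 N).sigma fun j => j.divisors, G jd.2 (jd.1 / jd.2) :=
    Finset.sum_sigma' _ _ fun j d => G d (j / d)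
  rw [h5]
  refine Finset.sum_bij' (fun dk _ => ⟨dk.1 * dk.2, dk.1⟩) (fun jd _ => (jd.2, jd.1 / jd.2))
    ?_ ?_ ?_ ?_ ?_
  · rintro ⟨d, k⟩ h
    simp only [Finset.mem_filter, Finset.mem_product, Finset.mem_Icc] at h
    simp only [Finset.mem_sigma, Finset.mem_Icc, Nat.mem_divisors]
    have : 0 < d * k := Nat.mul_pos (by lia) (by lia)
    exact ⟨⟨this, h.2⟩, dvd_mul_right _ _, this.ne'⟩
  · rintro ⟨j, d⟩ h
    simp only [Finset.mem_sigma, Finset.mem_Icc, Nat.mem_divisors] at h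
    obtain ⟨⟨h5, h6⟩, ⟨k, rfl⟩, h7⟩ := h
    have hd : 0 < d := Nat.pos_of_ne_zero (by rintro rfl; simp at h7)
    have hk : 0 < k := Nat.pos_of_ne_zero (by rintro rfl; simp at h7)
    simp only [Finset.mem_filter, Finset.mem_product, Finset.mem_Icc, Nat.mul_div_cancel_left _ hd]
    exact ⟨⟨⟨hd, (Nat.le_mul_of_pos_right _ hk).trans h6⟩,
      hk, (Nat.le_mul_of_pos_left _ hd).trans h6⟩, h6⟩
  · rintro ⟨d, k⟩ h
    simp only [Finset.mem_filter, Finset.mem_product, Finset.mem_Icc] at h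
    simp only [Nat.mul_div_cancel_left _ (show 0 < d by lia)]
  · rintro ⟨j, d⟩ h
    simp only [Finset.mem_sigma, Nat.mem_divisors] at h
    simp only [Nat.mul_div_cancel' h.2.1]
  · rintro ⟨d, k⟩ h
    simp only [Finset.mem_filter, Finset.mem_product, Finset.mem_Icc] at h
    simp only [Nat.mul_div_cancel_left _ (show 0 < d by lia)]

/-- Summing a function of the minimal polynomial over a finite extension. -/
theorem sum_minpoly {K : Type*} [Field K] [Fintype K] [Algebra F K] (φ : F[X] → ℂ) :
    ∑ x : K, φ (minpoly F x) =
      ∑ d ∈ (Module.finrank F K).divisors, ∑ P ∈ irrOf F d, (d : ℂ) * φ P := by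
  classical
  have : Module.Finite F K := Module.Finite.of_finite
  set j := Module.finrank F K with hj
  have hjpos : 0 < j := Module.finrank_pos
  have hintg (x : K) : IsIntegral F x := Algebra.IsIntegral.isIntegral x
  have hfib : ∀ d ∈ j.divisors, ∀ P ∈ irrOf F d,
      (Finset.univ.filter fun x : K => minpoly F x = P).card = d := by
    intro d hd P hP
    obtain ⟨⟨hm, hPd⟩, hi⟩ := mem_irrOf.mp hP
    have h1 : P ∣ X ^ Nat.card F ^ j - X := by
      rw [← hi.natDegree_dvd_iff_dvd_X_pow_card_pow_sub_X, hPd]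
      exact Nat.dvd_of_mem_divisors hd
    have hK : Nat.card F ^ j = Fintype.card K := by
      rw [← Nat.card_eq_fintype_card, Module.natCard_eq_pow_finrank (K := F) (V := K)]
    rw [hK] at h1
    have h2 := Polynomial.map_dvd (algebraMap F K) h1
    have h3 : (X ^ Fintype.card K - X : F[X]).map (algebraMap F K) = X ^ Fintype.card K - X := by
      simp
    rw [h3] at h2
    have h4 : (X ^ Fintype.card K - X : K[X]) ≠ 0 :=
      FiniteField.X_pow_card_sub_X_ne_zero K Fintype.one_lt_card
    have h5 : (X ^ Fintype.card K - X : K[X]).Splits := by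
      rw [splits_iff_card_roots, FiniteField.roots_X_pow_card_sub_X,
        FiniteField.X_pow_card_sub_X_natDegree_eq K Fintype.one_lt_card]
      rfl
    have h6 := h5.of_dvd h4 h2
    have h7 : (P.map (algebraMap F K)).roots.Nodup := by
      refine Multiset.nodup_of_le (roots.le_of_dvd h4 h2) ?_
      rw [FiniteField.roots_X_pow_card_sub_X]; exact Finset.univ.nodup
    have h8 := splits_iff_card_roots.mp h6
    rw [natDegree_map, hPd] at h8
    rw [← h8, ← Multiset.toFinset_card_of_nodup h7]
    congr 1
    ext x
    simp only [Finset.mem_filter, Finset.mem_univ, true_and, Multiset.mem_toFinset,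
      mem_roots (map_ne_zero hm.ne_zero : P.map (algebraMap F K) ≠ 0), IsRoot.def,
      eval_map_algebraMap]
    constructor
    · rintro rfl; exact minpoly.aeval F x
    · intro h; exact (minpoly.eq_of_irreducible_of_monic hi h hm).symm
  have hdisj : ((j.divisors : Finset ℕ) : Set ℕ).PairwiseDisjoint (irrOf F) := by
    intro a _ b _ hab
    refine Finset.disjoint_left.mpr fun P h1 h2 => hab ?_
    rw [← (mem_irrOf.mp h1).1.2, (mem_irrOf.mp h2).1.2]
  rw [← Finset.sum_fiberwise_of_maps_to (t := j.divisors.biUnion (irrOf F)) (g := minpoly F),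
    Finset.sum_biUnion hdisj]
  · refine Finset.sum_congr rfl fun d hd => Finset.sum_congr rfl fun P hP => ?_
    rw [Finset.sum_congr rfl (g := fun _ => φ P), Finset.sum_const, hfib d hd P hP, nsmul_eq_mul]
    intro x hx
    rw [(Finset.mem_filter.mp hx).2]
  · intro x _
    rw [Finset.mem_biUnion]
    exact ⟨_, Nat.mem_divisors.mpr ⟨minpoly.degree_dvd (hintg x), hjpos.ne'⟩,
      mem_irrOf.mpr ⟨⟨minpoly.monic (hintg x), rfl⟩, minpoly.irreducible (hintg x)⟩⟩

omit [Fintype F] in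
/-- The norm of `x - p` is, up to sign, a power of the value at `p` of the minimal polynomial of `x`;
this links character sums over extensions with values of `evalChar` at irreducible polynomials. -/
theorem norm_sub_algebraMap {K : Type*} [Field K] [Finite K] [Algebra F K] (x : K) (p : F) :
    Algebra.norm F (x - algebraMap F K p) = (-1) ^ Module.finrank F K *
      (minpoly F x).eval p ^ (Module.finrank F K / (minpoly F x).natDegree) := by
  have : Module.Finite F K := Module.Finite.of_finite
  set y := x - algebraMap F K p with hy
  have hintg : IsIntegral F y := Algebra.IsIntegral.isIntegral y
  have h1 : minpoly F y = (minpoly F x).comp (X + C p) := minpoly.sub_algebraMap x p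
  have h2 : (minpoly F y).natDegree = (minpoly F x).natDegree := by
    rw [h1, natDegree_comp, natDegree_X_add_C, mul_one]
  have h3 : Algebra.norm F (IntermediateField.AdjoinSimple.gen F y) =
      (-1) ^ (minpoly F y).natDegree * (minpoly F x).eval p := by
    have := Algebra.PowerBasis.norm_gen_eq_coeff_zero_minpoly (IntermediateField.adjoin.powerBasis hintg)
    rw [IntermediateField.adjoin.powerBasis_gen, IntermediateField.minpoly_gen,
      IntermediateField.adjoin.powerBasis_dim] at this
    rw [this, coeff_zero_eq_eval_zero]
    congr 1
    rw [h1]; simp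
  have h4 := Module.finrank_mul_finrank F (IntermediateField.adjoin F {y}) K
  rw [IntermediateField.adjoin.finrank hintg] at h4
  have h5 : 0 < (minpoly F y).natDegree := minpoly.natDegree_pos hintg
  rw [Algebra.norm_eq_norm_adjoin, h3, mul_pow, ← pow_mul, h4, ← h2, ← h4,
    Nat.mul_div_cancel_left _ h5]

end

end

/-! ### The Weil bound for products of characters -/

section

open Polynomial

variable {F : Type} [Field F] [Fintype F]

/-- The completely multiplicative function `g ↦ ∏ ψᵢ (g (pᵢ))` on polynomials. -/
noncomputable def evalChar {ι : Type*} (ψ : ι → MulChar F ℂ) (p : ι → F) (J : Finset ι) :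
    F[X] →* ℂ where
  toFun g := ∏ i ∈ J, ψ i (g.eval (p i))
  map_one' := by simp
  map_mul' g h := by simp [Finset.prod_mul_distrib]

omit [Fintype F] in
theorem evalChar_apply {ι : Type*} (ψ : ι → MulChar F ℂ) (p : ι → F) (J : Finset ι) (g : F[X]) :
    evalChar ψ p J g = ∏ i ∈ J, ψ i (g.eval (p i)) := rfl

/-- The L-function is a polynomial of degree less than `|J|`: adding multiples of
`∏_{i ≠ i₀} (X - pᵢ)` permutes the monic polynomials of degree `n` and changes only the value at the
point with index `i₀`, over which the nontrivial character sums to zero. -/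
theorem sum_evalChar_eq_zero {ι : Type*} {ψ : ι → MulChar F ℂ} {p : ι → F}
    (hp : Function.Injective p) {J : Finset ι} {i₀ : ι} (hi₀ : i₀ ∈ J) (hψ : ψ i₀ ≠ 1)
    {n : ℕ} (hn : J.card ≤ n) : ∑ g ∈ monicOf F n, evalChar ψ p J g = 0 := by
  classical
  set h : F[X] := ∏ i ∈ J.erase i₀, (X - C (p i)) with hh
  have hdeg : h.natDegree = J.card - 1 := by
    rw [hh, natDegree_prod_of_monic _ _ fun i _ => monic_X_sub_C _]
    simp [Finset.card_erase_of_mem hi₀]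
  have hpos : 0 < J.card := Finset.card_pos.mpr ⟨i₀, hi₀⟩
  have hw : h.eval (p i₀) ≠ 0 := by
    rw [hh, eval_prod, Finset.prod_ne_zero_iff]
    intro i hi
    rw [eval_sub, eval_X, eval_C, sub_ne_zero]
    exact fun e => (Finset.mem_erase.mp hi).1 (hp e).symm
  have h0 : ∀ i ∈ J.erase i₀, h.eval (p i) = 0 := by
    intro i hi
    rw [hh, eval_prod]
    exact Finset.prod_eq_zero hi (by simp)
  have hmem : ∀ c : F, ∀ g ∈ monicOf F n, g + C c * h ∈ monicOf F n := by
    intro c g hg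
    obtain ⟨h1, h2⟩ := mem_monicOf.mp hg
    have h3 : (C c * h).degree < g.degree := by
      refine degree_lt_degree ((natDegree_C_mul_le c h).trans_lt ?_)
      lia
    exact mem_monicOf.mpr ⟨h1.add_of_left h3, by rw [natDegree_add_eq_left_of_degree_lt h3, h2]⟩
  have hshift : ∀ c : F, ∑ g ∈ monicOf F n, evalChar ψ p J (g + C c * h) =
      ∑ g ∈ monicOf F n, evalChar ψ p J g := by
    intro c
    refine Finset.sum_bij' (fun g _ => g + C c * h) (fun g _ => g + C (-c) * h)
      (hmem c) (hmem (-c)) ?_ ?_ ?_ <;> intros <;> simp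
  have hsum : ∑ c : F, ∑ g ∈ monicOf F n, evalChar ψ p J (g + C c * h) = 0 := by
    rw [Finset.sum_comm]
    refine Finset.sum_eq_zero fun g _ => ?_
    have : ∀ c : F, evalChar ψ p J (g + C c * h) =
        ψ i₀ (g.eval (p i₀) + c * h.eval (p i₀)) *
          ∏ i ∈ J.erase i₀, ψ i (g.eval (p i)) := by
      intro c
      rw [evalChar_apply, ← Finset.mul_prod_erase _ _ hi₀]
      congr 1
      · simp
      · refine Finset.prod_congr rfl fun i hi => ?_
        simp [h0 i hi]
    simp only [this, ← Finset.sum_mul]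
    have h4 : ∑ c : F, ψ i₀ (g.eval (p i₀) + c * h.eval (p i₀)) = ∑ c : F, ψ i₀ c :=
      Fintype.sum_equiv ((Equiv.mulRight₀ _ hw).trans (Equiv.addLeft (g.eval (p i₀)))) _ _
        fun c => by simp
    rw [h4, MulChar.sum_eq_zero_of_ne_one hψ, zero_mul]
  simp only [hshift, Finset.sum_const, Finset.card_univ, nsmul_eq_mul] at hsum
  exact (mul_eq_zero.mp hsum).resolve_left (by simp)

theorem sum_monicOf_zero {φ : F[X] → ℂ} : ∑ g ∈ monicOf F 0, φ g = φ 1 := by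
  have : monicOf F 0 = {1} := by
    ext g
    rw [mem_monicOf, Finset.mem_singleton]
    constructor
    · rintro ⟨h1, h2⟩
      exact h1.natDegree_eq_zero.mp h2
    · rintro rfl
      simp
  rw [this, Finset.sum_singleton]

theorem sum_monicOf_one {φ : F[X] → ℂ} : ∑ g ∈ monicOf F 1, φ g = ∑ a : F, φ (X + C a) := by
  classical
  symm
  refine Finset.sum_bij (fun a _ => X + C a) ?_ ?_ ?_ ?_
  · intro a _
    exact mem_monicOf.mpr ⟨monic_X_add_C a, natDegree_X_add_C a⟩
  · intro a _ b _ h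
    simpa using h
  · intro g hg
    obtain ⟨h1, h2⟩ := mem_monicOf.mp hg
    exact ⟨g.coeff 0, Finset.mem_univ _, (h1.eq_X_add_C h2).symm⟩
  · intros; rfl

/-- The Weil bound for a product of nontrivial characters at distinct points. The sum is the linear
coefficient of an L-function of degree at most `|J| - 1`. The bound `charSum_le` for a single character
applies after writing the characters as powers `χ' ^ e i` with coprime exponents. -/
theorem weil_bound {ι : Type*} (χ : MulChar F ℂ) {p : ι → F} (hp : Function.Injective p)
    {J : Finset ι} (hJ : J.Nonempty) {t : ι → ℕ} (ht : ∀ i ∈ J, χ ^ t i ≠ 1) :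
    ‖∑ a : F, ∏ i ∈ J, (χ ^ t i) (a + p i)‖ ≤ ((J.card : ℝ) - 1) * √(Fintype.card F) := by
  classical
  set ψ : ι → MulChar F ℂ := fun i => χ ^ t i with hψ
  set Λ := evalChar ψ p J with hΛ
  obtain ⟨i₀, hi₀⟩ := hJ
  have hpos : 0 < J.card := Finset.card_pos.mpr ⟨i₀, hi₀⟩
  have htpos : ∀ i ∈ J, t i ≠ 0 := fun i hi h => ht i hi (by rw [h, pow_zero])
  -- a generator `χ'` of the group generated by the `ψ i`, with `ψ i = χ' ^ e i`
  set d := J.gcd t with hd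
  have hdpos : 0 < d := Nat.pos_of_ne_zero fun h =>
    htpos i₀ hi₀ (Finset.gcd_eq_zero_iff.mp h i₀ hi₀)
  set e : ι → ℕ := fun i => t i / d with he
  have hde : ∀ i ∈ J, d * e i = t i := fun i hi => Nat.mul_div_cancel' (Finset.gcd_dvd hi)
  have hepos : ∀ i ∈ J, 0 < e i := fun i hi => Nat.pos_of_ne_zero fun h =>
    htpos i hi (by rw [← hde i hi, h, mul_zero])
  have hgcd : J.gcd e = 1 := Finset.gcd_div_eq_one hi₀ (htpos i₀ hi₀)
  set χ' := χ ^ d with hχ'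
  have hψe : ∀ i ∈ J, ψ i = χ' ^ e i := fun i hi => by
    rw [hψ, hχ', ← pow_mul, hde i hi]
  have hχ'1 : χ' ≠ 1 := fun h => ht i₀ hi₀ (by
    have := hψe i₀ hi₀
    rw [h, one_pow] at this; exact this)
  set f : F[X] := ∏ i ∈ J, (X - C (p i)) ^ e i with hf
  have hf0 : f ≠ 0 := Finset.prod_ne_zero_iff.mpr fun i _ => pow_ne_zero _ (X_sub_C_ne_zero _)
  have hroot : ∀ i ∈ J, f.rootMultiplicity (p i) = e i := by
    intro i hi
    rw [← count_roots, hf, roots_prod _ _ hf0, Multiset.count_bind]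
    simp only [roots_pow, roots_X_sub_C, Multiset.count_nsmul, Multiset.count_singleton]
    change ∑ j ∈ J, _ = _
    rw [Finset.sum_eq_single i]
    · simp
    · intro j _ hj
      rw [if_neg fun h => hj (hp h).symm, mul_zero]
    · exact fun h => absurd hi h
  have hfdeg : 0 < f.natDegree := by
    rw [hf, natDegree_prod_of_monic _ _ fun i _ => (monic_X_sub_C _).pow _]
    refine lt_of_lt_of_le ?_ (Finset.single_le_sum (fun i _ => Nat.zero_le _) hi₀)
    simpa using hepos i₀ hi₀
  obtain ⟨B, k₀, hB⟩ := charSum_le χ' hχ'1 hf0 hfdeg (by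
    intro ℓ hℓ _
    by_contra! h
    have : ℓ ∣ J.gcd e := Finset.dvd_gcd fun i hi => by rw [← hroot i hi]; exact h _
    rw [hgcd] at this
    exact hℓ.one_lt.ne' (Nat.dvd_one.mp this))
  set A : ℕ → ℂ := fun n => ∑ g ∈ monicOf F n, Λ g with hA
  set S : ℕ → ℂ := fun j => ∑ d ∈ j.divisors, ∑ P ∈ irrOf F d, (d : ℂ) * Λ P ^ (j / d) with hS
  have hA1 : A 1 = ∑ a : F, ∏ i ∈ J, (χ ^ t i) (a + p i) := by
    rw [hA]
    change ∑ g ∈ monicOf F 1, Λ g = _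
    rw [sum_monicOf_one]
    refine Finset.sum_congr rfl fun a _ => ?_
    rw [hΛ, evalChar_apply]
    simp [hψ, add_comm]
  have hSb : ∀ k ≥ max k₀ 1, ‖S (2 * k)‖ ≤ B * (Fintype.card F : ℝ) ^ k := by
    intro k hk
    have hk1 : 1 ≤ k := (le_max_right _ _).trans hk
    obtain ⟨ch, hch⟩ := CharP.exists F
    have : Fact ch.Prime := ⟨CharP.char_is_prime F ch⟩
    have : NeZero (2 * k) := ⟨by lia⟩
    let K := FiniteField.Extension F ch (2 * k)
    have : Fintype K := Fintype.ofFinite K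
    have hfr : Module.finrank F K = 2 * k := FiniteField.finrank_extension F ch (2 * k)
    have hcard : Fintype.card K = Fintype.card F ^ (2 * k) := by
      rw [Module.card_eq_pow_finrank (K := F) (V := K), hfr]
    have hkey : S (2 * k) = ∑ x : K, χ' (Algebra.norm F (aeval x f)) := by
      have h1 := sum_minpoly (F := F) (K := K) fun P => Λ P ^ (2 * k / P.natDegree)
      rw [hfr] at h1
      have h2 : S (2 * k) = ∑ d ∈ (2 * k).divisors, ∑ P ∈ irrOf F d,
          (d : ℂ) * Λ P ^ (2 * k / P.natDegree) :=
        Finset.sum_congr rfl fun d _ => Finset.sum_congr rfl fun P hP => by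
          rw [(mem_irrOf.mp hP).1.2]
      rw [h2, ← h1]
      refine Finset.sum_congr rfl fun x _ => ?_
      have h3 : Algebra.norm F (aeval x f) = ∏ i ∈ J,
          ((minpoly F x).eval (p i) ^ (2 * k / (minpoly F x).natDegree)) ^ e i := by
        rw [hf, map_prod, map_prod]
        refine Finset.prod_congr rfl fun i _ => ?_
        rw [map_pow, map_pow, map_sub, aeval_X, aeval_C, norm_sub_algebraMap, hfr,
          pow_mul (-1 : F), neg_one_sq, one_pow, one_mul]
      rw [h3, map_prod, hΛ, evalChar_apply, ← Finset.prod_pow]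
      refine Finset.prod_congr rfl fun i hi => ?_
      rw [hψe i hi, map_pow, map_pow, MulChar.pow_apply' _ (hepos i hi).ne', ← pow_mul, ← pow_mul,
        mul_comm (e i)]
    rw [hkey]
    exact hB k ((le_max_left _ _).trans hk) K hcard
  have := newton_bound (A := A) (S := S) (D := J.card - 1) (q := Fintype.card F)
    (by rw [hA]; change ∑ g ∈ monicOf F 0, Λ g = 1; rw [sum_monicOf_zero, map_one])
    (fun n hn => sum_evalChar_eq_zero hp hi₀ (ht i₀ hi₀) (by lia))
    (fun N _ => logDeriv_eulerProduct Λ N) (by exact_mod_cast Fintype.card_pos) hSb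
  rw [hA1, Nat.cast_sub hpos, Nat.cast_one] at this
  exact this

end

/-! ### Trivial total character, and orthogonality over zero-sum tuples -/

section

open Polynomial

variable {F : Type} [Field F] [Fintype F]

/-- If the product of the characters is trivial, the summand has the value `1` at infinity. Moving one of
the points to infinity by `a ↦ 1 / (a + p i₀)` leaves a sum over one point fewer, which the new point
`b = 0` completes. -/
theorem weil_bound_of_prod_eq_one {ι : Type*} (χ : MulChar F ℂ) {p : ι → F}
    (hp : Function.Injective p) {J : Finset ι} (hJ : J.Nonempty) {t : ι → ℕ}
    (ht : ∀ i ∈ J, χ ^ t i ≠ 1) (hprod : χ ^ (∑ i ∈ J, t i) = 1) :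
    ‖(∑ a : F, ∏ i ∈ J, (χ ^ t i) (a + p i)) + 1‖ ≤
      ((J.card : ℝ) - 2) * √(Fintype.card F) := by
  classical
  obtain ⟨i₀, hi₀⟩ := hJ
  set J' := J.erase i₀ with hJ'
  have hne : J'.Nonempty := by
    rw [Finset.nonempty_iff_ne_empty]
    intro h
    have h1 : J = {i₀} := by rw [← Finset.insert_erase hi₀, ← hJ', h]; rfl
    rw [h1, Finset.sum_singleton] at hprod
    exact ht i₀ hi₀ hprod
  have hp' : Function.Injective fun i => (p i - p i₀)⁻¹ := fun i j h => by
    simpa using hp (sub_left_injective (inv_injective h))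
  have hW := weil_bound χ hp' hne (t := t) fun i hi => ht i (Finset.mem_of_mem_erase hi)
  have hδ : ∀ i ∈ J', p i - p i₀ ≠ 0 := fun i hi =>
    sub_ne_zero.mpr fun h => (Finset.mem_erase.mp hi).1 (hp h)
  set u : ℂ := ∏ i ∈ J', (χ ^ t i) (p i - p i₀) with hu
  have hu1 : ‖u‖ ≤ 1 := by
    rw [hu, norm_prod]
    exact Finset.prod_le_one (fun _ _ => norm_nonneg _) fun i _ => mulChar_norm_le_one _ _
  have hall : ∀ x : F, x ≠ 0 → ∏ i ∈ J, (χ ^ t i) x = 1 := by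
    intro x hx
    have h1 : ∀ i ∈ J, (χ ^ t i) x = (χ x) ^ t i := fun i hi =>
      MulChar.pow_apply' _ (fun h => ht i hi (by rw [h, pow_zero])) _
    have h0 : ∑ i ∈ J, t i ≠ 0 := fun h =>
      ht i₀ hi₀ (by rw [(Finset.sum_eq_zero_iff.mp h) i₀ hi₀, pow_zero])
    rw [Finset.prod_congr rfl h1, Finset.prod_pow_eq_pow_sum, ← MulChar.pow_apply' _ h0, hprod,
      MulChar.one_apply (isUnit_iff_ne_zero.mpr hx)]
  have hterm : ∀ b : F, b ≠ 0 → ∏ i ∈ J, (χ ^ t i) ((b⁻¹ - p i₀) + p i) =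
      u * ∏ i ∈ J', (χ ^ t i) (b + (p i - p i₀)⁻¹) := by
    intro b hb
    rw [hu, ← Finset.prod_mul_distrib]
    have h1 : ∀ i ∈ J, (χ ^ t i) ((b⁻¹ - p i₀) + p i) =
        (χ ^ t i) b⁻¹ * (χ ^ t i) (1 + b * (p i - p i₀)) := by
      intro i _
      rw [← map_mul]
      congr 1
      field_simp
      ring
    rw [Finset.prod_congr rfl h1, Finset.prod_mul_distrib, hall _ (inv_ne_zero hb), one_mul,
      ← Finset.mul_prod_erase _ _ hi₀, sub_self, mul_zero, add_zero, map_one, one_mul]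
    refine Finset.prod_congr rfl fun i hi => ?_
    rw [← map_mul]
    congr 1
    have := hδ i hi
    field_simp
    ring
  have hkey : (∑ a : F, ∏ i ∈ J, (χ ^ t i) (a + p i)) + 1 =
      u * ∑ b : F, ∏ i ∈ J', (χ ^ t i) (b + (p i - p i₀)⁻¹) := by
    have h0 : u * ∏ i ∈ J', (χ ^ t i) (0 + (p i - p i₀)⁻¹) = 1 := by
      rw [hu, ← Finset.prod_mul_distrib]
      refine Finset.prod_eq_one fun i hi => ?_
      rw [← map_mul, zero_add, mul_inv_cancel₀ (hδ i hi), map_one]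
    rw [Finset.mul_sum, ← Finset.sum_erase_add (f := fun b =>
      u * ∏ i ∈ J', (χ ^ t i) (b + (p i - p i₀)⁻¹)) _ (Finset.mem_univ (0 : F)), h0]
    congr 1
    have h2 : ∏ i ∈ J, (χ ^ t i) (-p i₀ + p i) = 0 :=
      Finset.prod_eq_zero hi₀ (by rw [neg_add_cancel, MulChar.map_zero])
    rw [← Finset.sum_erase_add _ _ (Finset.mem_univ (-p i₀)), h2, add_zero]
    symm
    refine Finset.sum_bij' (fun b _ => b⁻¹ - p i₀) (fun a _ => (a + p i₀)⁻¹) ?_ ?_ ?_ ?_ ?_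
    · intro b hb
      simpa [sub_eq_neg_self] using hb
    · intro a ha
      have : a + p i₀ ≠ 0 := fun h => (Finset.mem_erase.mp ha).1 (eq_neg_of_add_eq_zero_left h)
      simpa using this
    · intro b _; simp
    · intro b _; simp
    · intro b hb
      exact (hterm b (Finset.mem_erase.mp hb).1).symm
  rw [hkey, norm_mul]
  calc ‖u‖ * _ ≤ 1 * (((J'.card : ℝ) - 1) * √(Fintype.card F)) :=
        mul_le_mul hu1 hW (norm_nonneg _) zero_le_one
    _ = _ := by
        rw [hJ', Finset.card_erase_of_mem hi₀, Nat.cast_sub (Finset.card_pos.mpr ⟨i₀, hi₀⟩)]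
        push_cast
        ring

section Orthogonality

variable {ι : Type*} [Fintype ι] {r : ℕ} [NeZero r]

/-- The vectors over `ℤ/r` with coordinate sum zero. -/
def sumZero (ι : Type*) [Fintype ι] (r : ℕ) [NeZero r] : AddSubgroup (ι → ZMod r) where
  carrier := {t | ∑ i, t i = 0}
  zero_mem' := by simp
  add_mem' {a b} ha hb := by
    simp only [Set.mem_ofPred_eq] at *
    simp [Finset.sum_add_distrib, ha, hb]
  neg_mem' {a} ha := by
    simp only [Set.mem_ofPred_eq] at *
    simp [ha]

theorem card_filter_eq_zero_mul {G : Type*} [AddCommGroup G] [Fintype G] (φ : G →+ ZMod r)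
    (s : ZMod r → G) (hs : ∀ c, φ (s c) = c) :
    r * Fintype.card {g : G // φ g = 0} = Fintype.card G := by
  classical
  have : G ≃ ZMod r × {g : G // φ g = 0} :=
    { toFun := fun g => (φ g, ⟨g - s (φ g), by simp [hs]⟩)
      invFun := fun x => x.2.1 + s x.1
      left_inv := fun g => by simp
      right_inv := fun x => by
        obtain ⟨c, g, hg⟩ := x
        simp [hs, hg] }
  rw [Fintype.card_congr this, Fintype.card_prod, ZMod.card]

open Classical in
theorem card_sumZero [Nonempty ι] (hr : Fintype.card ι = r) :
    Fintype.card (sumZero ι r) = r ^ (r - 1) := by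
  have i₀ : ι := Classical.arbitrary ι
  let φ : (ι → ZMod r) →+ ZMod r :=
    { toFun := fun t => ∑ i, t i
      map_zero' := by simp
      map_add' := fun a b => by simp [Finset.sum_add_distrib] }
  have h := card_filter_eq_zero_mul (r := r) φ (fun c => Pi.single i₀ c) (fun c => by simp [φ])
  have h2 : Fintype.card {g : ι → ZMod r // φ g = 0} = Fintype.card (sumZero ι r) :=
    Fintype.card_congr (Equiv.refl _)
  rw [h2, Fintype.card_fun, ZMod.card, hr] at h
  have hrpos : 0 < r := Nat.pos_of_neZero r
  refine Nat.eq_of_mul_eq_mul_left hrpos (h.trans ?_)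
  rw [← pow_succ', Nat.sub_add_cancel hrpos]

open Classical in
/-- Translation by constant tuples, which lie in `sumZero` as `|ι| = r`, makes the value of the `j`-th
coordinate equidistributed. -/
theorem card_sumZero_apply_eq_zero (hr : Fintype.card ι = r) (j : ι) :
    r * Fintype.card {t : sumZero ι r // t.1 j = 0} = Fintype.card (sumZero ι r) := by
  let φ : sumZero ι r →+ ZMod r := (Pi.evalAddMonoidHom _ j).comp (sumZero ι r).subtype
  exact card_filter_eq_zero_mul (r := r) φ
    (fun c => ⟨fun _ => c, by change ∑ _ : ι, c = 0; simp [hr]⟩) (fun c => rfl)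

theorem pow_val_add {z : ℂ} (hz : z ^ r = 1) (a b : ZMod r) :
    z ^ (a + b).val = z ^ a.val * z ^ b.val := by
  rw [ZMod.val_add, ← pow_add, ← pow_eq_pow_mod _ hz]

/-- A character sum over `sumZero ι r`, where coordinates with `z i = 0` force `t i = 0`
because `0 ^ 0 = 1`. -/
noncomputable def tupleSum (r : ℕ) [NeZero r] (z : ι → ℂ) : ℂ := by
  classical
  exact ∑ t : sumZero ι r, ∏ i, z i ^ (t.1 i).val

open Classical in
theorem tupleSum_eq (z : ι → ℂ) :
    tupleSum r z = ∑ t : sumZero ι r, ∏ i, z i ^ (t.1 i).val := rfl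

open Classical in
/-- Orthogonality: on the tuples supported where `z` does not vanish, `t ↦ ∏ zᵢ ^ tᵢ` is a group
character, so its sum is either the number of these tuples or zero. -/
theorem tupleSum_dichotomy {z : ι → ℂ} (hz : ∀ i, z i = 0 ∨ z i ^ r = 1) :
    (tupleSum r z = (Fintype.card {t : sumZero ι r // ∀ i, z i = 0 → t.1 i = 0} : ℕ) ∧
      ∀ t : sumZero ι r, (∀ i, z i = 0 → t.1 i = 0) → ∏ i, z i ^ (t.1 i).val = 1) ∨
    (tupleSum r z = 0 ∧
      ∃ t : sumZero ι r, (∀ i, z i = 0 → t.1 i = 0) ∧ ∏ i, z i ^ (t.1 i).val ≠ 1) := by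
  set T : Finset (sumZero ι r) := Finset.univ.filter fun t => ∀ i, z i = 0 → t.1 i = 0 with hT
  have hsum : tupleSum r z = ∑ t ∈ T, ∏ i, z i ^ (t.1 i).val := by
    rw [tupleSum_eq]
    symm
    refine Finset.sum_subset (Finset.subset_univ _) fun t _ ht => ?_
    simp only [hT, Finset.mem_filter, Finset.mem_univ, true_and, not_forall] at ht
    obtain ⟨i, hi, hti⟩ := ht
    refine Finset.prod_eq_zero (Finset.mem_univ i) ?_
    rw [hi, zero_pow]
    rwa [ne_eq, ZMod.val_eq_zero]
  by_cases h : ∀ t ∈ T, ∏ i, z i ^ (t.1 i).val = 1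
  · left
    refine ⟨?_, fun t ht => h t (by simpa [hT] using ht)⟩
    rw [hsum, Finset.sum_congr rfl h, Finset.sum_const, nsmul_eq_mul, mul_one, hT,
      Fintype.card_subtype]
  · right
    push Not at h
    obtain ⟨t₀, ht₀, hne⟩ := h
    have ht₀' : ∀ i, z i = 0 → t₀.1 i = 0 := by simpa [hT] using ht₀
    refine ⟨?_, t₀, ht₀', hne⟩
    have hmul : ∀ t ∈ T, ∏ i, z i ^ ((t + t₀).1 i).val =
        (∏ i, z i ^ (t.1 i).val) * ∏ i, z i ^ (t₀.1 i).val := by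
      intro t ht
      have ht' : ∀ i, z i = 0 → t.1 i = 0 := by simpa [hT] using ht
      rw [← Finset.prod_mul_distrib]
      refine Finset.prod_congr rfl fun i _ => ?_
      rcases hz i with h0 | h1
      · simp [ht' i h0, ht₀' i h0]
      · exact pow_val_add h1 _ _
    have hshift : ∑ t ∈ T, ∏ i, z i ^ ((t + t₀).1 i).val = ∑ t ∈ T, ∏ i, z i ^ (t.1 i).val := by
      refine Finset.sum_bij' (fun t _ => t + t₀) (fun t _ => t - t₀) ?_ ?_ ?_ ?_ ?_
      · intro t ht
        simp only [hT, Finset.mem_filter, Finset.mem_univ, true_and] at ht ⊢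
        intro i hi
        simp [ht i hi, ht₀' i hi]
      · intro t ht
        simp only [hT, Finset.mem_filter, Finset.mem_univ, true_and] at ht ⊢
        intro i hi
        simp [ht i hi, ht₀' i hi]
      · intro t _; simp
      · intro t _; simp
      · intro t _; rfl
    rw [Finset.sum_congr rfl hmul, ← Finset.sum_mul] at hshift
    rw [hsum]
    by_contra hS
    exact hne (mul_left_cancel₀ hS (by rw [hshift, mul_one]))

open Classical in
/-- The sum over zero-sum tuples detects whether all the `r`-th roots of unity `z i` are equal. -/
theorem tupleSum_of_ne_zero [Nonempty ι] (hr : Fintype.card ι = r) {z : ι → ℂ}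
    (hz : ∀ i, z i ^ r = 1) :
    tupleSum r z = if ∀ i j, z i = z j then (r : ℂ) ^ (r - 1) else 0 := by
  have hz0 : ∀ i, z i ≠ 0 := fun i h => by
    have := hz i
    rw [h, zero_pow (NeZero.ne r)] at this
    exact zero_ne_one this
  have hone : ∀ i, z i ^ (1 : ZMod r).val = z i := fun i => by
    rw [ZMod.val_one_eq_one_mod, ← pow_eq_pow_mod _ (hz i), pow_one]
  rcases tupleSum_dichotomy (r := r) fun i => Or.inr (hz i) with ⟨h1, h2⟩ | ⟨h1, t, -, ht⟩
  · have h3 : ∀ i j, z i = z j := by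
      intro i j
      by_cases hij : i = j
      · rw [hij]
      have h4 := h2 ⟨Pi.single i 1 + Pi.single j (-1), by
        change ∑ k, _ = (0 : ZMod r)
        simp [Finset.sum_add_distrib]⟩ fun k hk => absurd hk (hz0 k)
      have h5 : ∏ k, z k ^ ((Pi.single i 1 + Pi.single j (-1) : ι → ZMod r) k).val =
          z i * z j ^ (-1 : ZMod r).val := by
        rw [Fintype.prod_eq_mul i j hij]
        · simp [hij, Ne.symm hij, hone]
        · rintro k ⟨hki, hkj⟩
          simp [hki, hkj]
      have h6 : z j * z j ^ (-1 : ZMod r).val = 1 := by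
        conv_lhs => rw [← hone j]
        rw [hone j]
        nth_rewrite 1 [← hone j]
        rw [← pow_val_add (hz j), add_neg_cancel, ZMod.val_zero, pow_zero]
      have h7 : z i * z j ^ (-1 : ZMod r).val = 1 := by rw [← h5]; exact h4
      exact mul_right_cancel₀ (pow_ne_zero _ (hz0 j)) (h7.trans h6.symm)
    rw [if_pos h3, h1, ← Nat.cast_pow, ← card_sumZero hr, Fintype.card_subtype]
    congr 1
    rw [Finset.filter_true_of_mem fun t _ i h => absurd h (hz0 i), Finset.card_univ]
  · rw [h1, if_neg]
    intro h
    apply ht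
    obtain ⟨i₀⟩ := ‹Nonempty ι›
    rw [Finset.prod_congr rfl fun i _ => by rw [h i i₀], Finset.prod_pow_eq_pow_sum]
    have : r ∣ ∑ i, (t.1 i).val := by
      rw [← ZMod.natCast_eq_zero_iff]
      push_cast
      simp only [ZMod.natCast_zmod_val]
      exact t.2
    obtain ⟨k, hk⟩ := this
    rw [hk, pow_mul, hz, one_pow]

end Orthogonality

end

/-! ### Counting points with equal character values -/

section

open Polynomial

variable {F : Type} [Field F] [Fintype F]

section Count

variable {ι : Type*} [Fintype ι] {r : ℕ} [NeZero r]

omit [Fintype F] in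
theorem mulChar_apply_eq_zero_or {χ : MulChar F ℂ} (hχ : orderOf χ = r) (x : F) :
    (x = 0 ∧ χ x = 0) ∨ (x ≠ 0 ∧ χ x ^ r = 1) := by
  by_cases hx : x = 0
  · left
    exact ⟨hx, by rw [hx, MulChar.map_zero]⟩
  · right
    refine ⟨hx, ?_⟩
    rw [← MulChar.pow_apply' _ (NeZero.ne r), ← hχ, pow_orderOf_eq_one,
      MulChar.one_apply (isUnit_iff_ne_zero.mpr hx)]

open Classical in
/-- The value at infinity added to the sum makes the Weil bound uniform over `sumZero`. -/
theorem tuple_charSum_bound {χ : MulChar F ℂ} (hχ : orderOf χ = r) {p : ι → F}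
    (hp : Function.Injective p) (t : sumZero ι r) (ht : t ≠ 0) :
    ‖(∑ a : F, ∏ i, χ (a + p i) ^ (t.1 i).val) + 1‖ ≤
      (((Finset.univ.filter fun i => t.1 i ≠ 0).card : ℝ) - 2) * √(Fintype.card F) := by
  set J := Finset.univ.filter fun i => t.1 i ≠ 0 with hJ
  have hval : ∀ i ∈ J, (t.1 i).val ≠ 0 := fun i hi => by
    rw [ne_eq, ZMod.val_eq_zero]; simpa [hJ] using hi
  have hne : J.Nonempty := by
    by_contra h
    rw [Finset.not_nonempty_iff_eq_empty, hJ, Finset.filter_eq_empty_iff] at h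
    apply ht
    ext i
    simpa using congrArg id (not_not.mp (h (Finset.mem_univ i)))
  have h1 : ∀ a : F, ∏ i, χ (a + p i) ^ (t.1 i).val =
      ∏ i ∈ J, (χ ^ (t.1 i).val) (a + p i) := by
    intro a
    rw [← Finset.prod_subset (Finset.subset_univ J)]
    · exact Finset.prod_congr rfl fun i hi => (MulChar.pow_apply' _ (hval i hi) _).symm
    · intro i _ hi
      have : t.1 i = 0 := by simpa [hJ] using hi
      rw [this, ZMod.val_zero, pow_zero]
  simp only [h1]
  refine weil_bound_of_prod_eq_one χ hp hne (t := fun i => (t.1 i).val) ?_ ?_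
  · intro i hi h
    have h2 : r ∣ (t.1 i).val := by
      have := orderOf_dvd_of_pow_eq_one h
      rwa [hχ] at this
    exact absurd (Nat.le_of_dvd (Nat.pos_of_ne_zero (hval i hi)) h2) (ZMod.val_lt _).not_ge
  · have h2 : r ∣ ∑ i ∈ J, (t.1 i).val := by
      rw [← ZMod.natCast_eq_zero_iff]
      push_cast
      simp only [ZMod.natCast_zmod_val]
      rw [Finset.sum_subset (Finset.subset_univ J) fun i _ hi => by simpa [hJ] using hi]
      exact t.2
    obtain ⟨k, hk⟩ := h2
    rw [hk, pow_mul, ← hχ, pow_orderOf_eq_one, one_pow]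

open Classical in
/-- The sum of `|supp t| - 2` over the nonzero tuples: on average a tuple has one zero coordinate. -/
theorem sum_support_card [Nonempty ι] (hr : Fintype.card ι = r) :
    ∑ t ∈ (Finset.univ : Finset (sumZero ι r)).erase 0,
      (((Finset.univ.filter fun i => t.1 i ≠ 0).card : ℝ) - 2) =
      (r : ℝ) ^ (r - 1) * ((r : ℝ) - 3) + 2 := by
  have hr0 : (r : ℝ) ≠ 0 := by exact_mod_cast NeZero.ne r
  have h1 : ∀ t : sumZero ι r, ((Finset.univ.filter fun i => t.1 i ≠ 0).card : ℝ) =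
      (r : ℝ) - ∑ i, if t.1 i = 0 then (1 : ℝ) else 0 := by
    intro t
    have h2 := Finset.card_filter_add_card_filter_not (s := (Finset.univ : Finset ι))
      (fun i => t.1 i = 0)
    rw [Finset.card_univ, hr] at h2
    rw [Finset.sum_boole, eq_sub_iff_add_eq, add_comm]
    exact_mod_cast h2
  have h3 : ∀ j : ι, (r : ℝ) * (∑ t : sumZero ι r, if t.1 j = 0 then (1 : ℝ) else 0) =
      (r : ℝ) ^ (r - 1) := by
    intro j
    rw [Finset.sum_boole, ← Fintype.card_subtype, ← Nat.cast_pow, ← card_sumZero hr,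
      ← card_sumZero_apply_eq_zero hr j]
    push_cast; rfl
  have h4 : ∑ t : sumZero ι r, ∑ i, (if t.1 i = 0 then (1 : ℝ) else 0) = (r : ℝ) ^ (r - 1) := by
    rw [Finset.sum_comm]
    have : ∀ j ∈ (Finset.univ : Finset ι),
        (∑ t : sumZero ι r, if t.1 j = 0 then (1 : ℝ) else 0) = (r : ℝ) ^ (r - 1) / r :=
      fun j _ => by rw [eq_div_iff hr0, mul_comm]; exact h3 j
    rw [Finset.sum_congr rfl this, Finset.sum_const, Finset.card_univ, hr, nsmul_eq_mul,
      mul_div_cancel₀ _ hr0]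
  have h5 : (((Finset.univ.filter fun i => (0 : sumZero ι r).1 i ≠ 0).card : ℝ) - 2) = -2 := by
    simp
  rw [Finset.sum_erase_eq_sub (Finset.mem_univ _), h5]
  simp only [h1, Finset.sum_sub_distrib, h4, Finset.sum_const, Finset.card_univ, card_sumZero hr,
    nsmul_eq_mul]
  push_cast
  ring

open Classical in
/-- The number of `a` for which `χ ((a + pᵢ) bᵢ)` is a nonzero constant in `i`. The `r` points `a = -pᵢ`
and the value at infinity contribute to the tuple sum between `0` and `2 r ^ (r - 1)` in total, which
accounts for the asymmetry of the two estimates. -/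
theorem count_bound (hr : Fintype.card ι = r) {χ : MulChar F ℂ} (hχ : orderOf χ = r)
    {p : ι → F} (hp : Function.Injective p) {b : ι → F} (hb : ∀ i, b i ≠ 0) {N : ℕ}
    (hN : N = (Finset.univ.filter fun a : F => (∀ i, a + p i ≠ 0) ∧
      ∀ i j, χ ((a + p i) * b i) = χ ((a + p j) * b j)).card) :
    (Fintype.card F : ℝ) + 1 - ((r : ℝ) ^ (r - 1) * ((r : ℝ) - 3) + 2) * √(Fintype.card F)
      - 2 * (r : ℝ) ^ (r - 1) ≤ (r : ℝ) ^ (r - 1) * N ∧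
    (r : ℝ) ^ (r - 1) * N ≤
      (Fintype.card F : ℝ) + 1 + ((r : ℝ) ^ (r - 1) * ((r : ℝ) - 3) + 2) * √(Fintype.card F) := by
  have : Nonempty ι := Fintype.card_pos_iff.mp (hr ▸ Nat.pos_of_neZero r)
  have hr0 : (r : ℝ) ≠ 0 := by exact_mod_cast NeZero.ne r
  set R : ℝ := (r : ℝ) ^ (r - 1) with hR
  have hRH : (Fintype.card (sumZero ι r) : ℝ) = R := by rw [card_sumZero hr]; push_cast; rfl
  have hRpos : 0 ≤ R := by positivity
  set z : F → ι → ℂ := fun a i => χ ((a + p i) * b i) with hz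
  set z' : ι → ℂ := fun i => χ (b i) with hz'
  have hzr : ∀ a i, z a i = 0 ∨ z a i ^ r = 1 := fun a i =>
    (mulChar_apply_eq_zero_or hχ _).imp And.right And.right
  have hz0 : ∀ a i, z a i = 0 → a = - p i := by
    intro a i h
    rcases mulChar_apply_eq_zero_or hχ ((a + p i) * b i) with h1 | h1
    · exact eq_neg_of_add_eq_zero_left ((mul_eq_zero.mp h1.1).resolve_right (hb i))
    · have h2 := h1.2
      rw [show χ ((a + p i) * b i) = 0 from h, zero_pow (NeZero.ne r)] at h2
      exact absurd h2 zero_ne_one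
  -- the sum over all tuples, split by the trivial tuple
  have hmain : ‖(∑ a : F, tupleSum r (z a)) + tupleSum r z' - ((Fintype.card F : ℂ) + 1)‖ ≤
      (R * ((r : ℝ) - 3) + 2) * √(Fintype.card F) := by
    have h1 : (∑ a : F, tupleSum r (z a)) + tupleSum r z' = ∑ t : sumZero ι r,
        (∏ i, χ (b i) ^ (t.1 i).val) * ((∑ a : F, ∏ i, χ (a + p i) ^ (t.1 i).val) + 1) := by
      simp only [tupleSum_eq]
      rw [Finset.sum_comm, ← Finset.sum_add_distrib]
      refine Finset.sum_congr rfl fun t _ => ?_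
      rw [mul_add, mul_one, Finset.mul_sum]
      congr 1
      refine Finset.sum_congr rfl fun a _ => ?_
      rw [← Finset.prod_mul_distrib]
      refine Finset.prod_congr rfl fun i _ => ?_
      rw [hz]
      simp only [map_mul, mul_pow]
      ring
    have h2 : (∏ i, χ (b i) ^ ((0 : sumZero ι r).1 i).val) *
        ((∑ a : F, ∏ i, χ (a + p i) ^ ((0 : sumZero ι r).1 i).val) + 1) =
        (Fintype.card F : ℂ) + 1 := by
      simp
    rw [h1, ← Finset.sum_erase_add _ _ (Finset.mem_univ (0 : sumZero ι r)), h2, add_sub_cancel_right,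
      ← sum_support_card hr, Finset.sum_mul]
    refine norm_sum_le_of_le _ fun t ht => ?_
    rw [norm_mul]
    refine (mul_le_of_le_one_left (norm_nonneg _) ?_).trans
      (tuple_charSum_bound hχ hp t (Finset.mem_erase.mp ht).1)
    rw [norm_prod]
    refine Finset.prod_le_one (fun _ _ => norm_nonneg _) fun i _ => ?_
    rw [norm_pow]
    exact pow_le_one₀ (norm_nonneg _) (mulChar_norm_le_one _ _)
  -- a tuple sum lies in `[0, R]`, and in `[0, R / r]` as soon as one coordinate vanishes
  have hreg : ∀ w : ι → ℂ, (∀ i, w i = 0 ∨ w i ^ r = 1) → ∃ c : ℝ, tupleSum r w = (c : ℂ) ∧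
      0 ≤ c ∧ c ≤ R ∧ ∀ j, w j = 0 → c ≤ R / r := by
    intro w hw
    rcases tupleSum_dichotomy hw with ⟨h, -⟩ | ⟨h, -⟩
    · refine ⟨_, by rw [h]; norm_cast, Nat.cast_nonneg _, ?_, ?_⟩
      · rw [← hRH]
        exact_mod_cast Fintype.card_subtype_le _
      · intro j hj
        rw [le_div_iff₀' (by exact_mod_cast Nat.pos_of_neZero r), ← hRH,
          ← card_sumZero_apply_eq_zero hr j]
        push_cast
        refine mul_le_mul_of_nonneg_left ?_ (Nat.cast_nonneg _)
        have : ∀ t : sumZero ι r, (∀ i, w i = 0 → t.1 i = 0) → t.1 j = 0 := fun t ht => ht j hj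
        exact_mod_cast Fintype.card_subtype_mono _ _ this
    · exact ⟨0, by rw [h]; simp, le_rfl, hRpos, fun _ _ => by positivity⟩
  choose c hc hc0 hcR hcz using fun a => hreg (z a) (hzr a)
  obtain ⟨c', hc', hc'0, hc'R, -⟩ := hreg z' fun i =>
    (mulChar_apply_eq_zero_or hχ _).imp And.right And.right
  -- each of the `r` points `a = -p i` contributes at most `R / r`
  have hsplit : ∃ δ : ℝ, 0 ≤ δ ∧ δ ≤ R ∧ ∑ a : F, c a = R * N + δ := by
    set Z : Finset F := Finset.univ.image fun i => - p i with hZ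
    refine ⟨∑ a ∈ Z, c a, Finset.sum_nonneg fun a _ => hc0 a, ?_, ?_⟩
    · rw [hZ, Finset.sum_image fun i _ j _ h => hp (neg_injective h)]
      calc ∑ i, c (- p i) ≤ ∑ _i : ι, R / r := Finset.sum_le_sum fun i _ => hcz _ i (by
            simp only [hz, neg_add_cancel, zero_mul, MulChar.map_zero])
        _ = R := by rw [Finset.sum_const, Finset.card_univ, hr, nsmul_eq_mul, mul_div_cancel₀ _ hr0]
    · rw [← Finset.sum_sdiff (Finset.subset_univ Z)]
      congr 1
      have h1 : ∀ a ∈ Finset.univ \ Z, c a =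
          if (∀ i, a + p i ≠ 0) ∧ ∀ i j, z a i = z a j then R else 0 := by
        intro a ha
        have h2 : ∀ i, a + p i ≠ 0 := fun i h => (Finset.mem_sdiff.mp ha).2
          (Finset.mem_image.mpr ⟨i, Finset.mem_univ _, (eq_neg_of_add_eq_zero_left h).symm⟩)
        have h3 := tupleSum_of_ne_zero hr (z := z a) fun i =>
          (hzr a i).resolve_left fun h => h2 i (by rw [hz0 a i h, neg_add_cancel])
        rw [hc a] at h3
        have h4 : c a = if ∀ i j, z a i = z a j then R else 0 := by
          split_ifs with h5
          · rw [if_pos h5] at h3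
            rw [hR]; exact_mod_cast h3
          · rw [if_neg h5] at h3
            exact_mod_cast h3
        rw [h4]
        simp only [h2, ne_eq, not_false_eq_true, implies_true, true_and]
      rw [Finset.sum_congr rfl h1, Finset.sum_subset (Finset.subset_univ _), ← Finset.sum_filter,
        Finset.sum_const, ← hN, nsmul_eq_mul, mul_comm]
      intro a _ ha
      rw [if_neg]
      rintro ⟨h, -⟩
      simp only [Finset.mem_sdiff, Finset.mem_univ, true_and, not_not, hZ, Finset.mem_image] at ha
      obtain ⟨i, rfl⟩ := ha
      exact h i (neg_add_cancel _)
  obtain ⟨δ, hδ0, hδR, hδ⟩ := hsplit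
  have hfin : |R * N + δ + c' - (Fintype.card F + 1)| ≤
      (R * ((r : ℝ) - 3) + 2) * √(Fintype.card F) := by
    rw [hc', Finset.sum_congr rfl fun a _ => hc a] at hmain
    rw [← hδ, ← Real.norm_eq_abs, ← Complex.norm_real]
    push_cast
    exact hmain
  rw [abs_le] at hfin
  constructor <;> linarith [hfin.1, hfin.2]

end Count

end

/-! ### Reduction to permutations of the group of powers -/

section

open Polynomial

variable {F : Type} [Field F] [Fintype F]

section Reduction

/-- The group of `s`-th powers in `Fˣ`. -/
abbrev powGroup (F : Type) [Field F] (s : ℕ) : Subgroup Fˣ := (powMonoidHom s : Fˣ →* Fˣ).range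

/-- The map `ζ ↦ ζ ^ n * (ζ ^ e + a) ^ s` induced on `s`-th powers by `x ^ (n + e * s) + a * x ^ n`. -/
def inducedMap (n e s : ℕ) (a : F) (ζ : powGroup F s) : F :=
  ((ζ : Fˣ) : F) ^ n * (a + ((ζ : Fˣ) : F) ^ e) ^ s

theorem card_powGroup {r s : ℕ} (hs : 0 < s) (hrs : Fintype.card F - 1 = r * s) :
    Nat.card (powGroup F s) = r := by
  rw [IsCyclic.card_powMonoidHom_range, Nat.card_units, Nat.card_eq_fintype_card, hrs,
    Nat.gcd_eq_right (dvd_mul_left s r), Nat.mul_div_cancel _ hs]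

/-- The standard criterion: `x ^ n h(x ^ s)` with `n` prime to `s` permutes `F` exactly when it has no zero in
`Fˣ` and induces an injection on `s`-th powers. -/
theorem bijective_iff_induced {n e s : ℕ} (hn : 0 < n)
    (hcop : n.Coprime s) (a : F) :
    Function.Bijective (fun x : F => x ^ (n + e * s) + a * x ^ n) ↔
      (∀ ζ : powGroup F s, a + ((ζ : Fˣ) : F) ^ e ≠ 0) ∧
        Function.Injective (inducedMap n e s a) := by
  set f : F → F := fun x => x ^ (n + e * s) + a * x ^ n with hf
  have hfx : ∀ x, f x = x ^ n * (a + (x ^ s) ^ e) := fun x => by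
    simp only [hf]; rw [pow_add, mul_comm e s, pow_mul]; ring
  have hf0 : f 0 = 0 := by rw [hfx, zero_pow hn.ne', zero_mul]
  have hfs : ∀ x : Fˣ, f x ^ s = inducedMap n e s a ⟨x ^ s, x, rfl⟩ := by
    intro x
    rw [hfx, inducedMap, mul_pow]
    push_cast
    ring
  constructor
  · intro hbij
    have hgood : ∀ ζ : powGroup F s, a + ((ζ : Fˣ) : F) ^ e ≠ 0 := by
      rintro ⟨_, x, rfl⟩ h
      refine x.ne_zero (hbij.injective ?_)
      rw [hf0, hfx]
      simp only [powMonoidHom_apply, Units.val_pow_eq_pow_val] at h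
      rw [h, mul_zero]
    refine ⟨hgood, ?_⟩
    have hmem : ∀ ζ : powGroup F s, ∃ ξ : powGroup F s,
        ((ξ : Fˣ) : F) = inducedMap n e s a ζ := by
      rintro ⟨_, x, rfl⟩
      have h1 : f x ≠ 0 := fun h => x.ne_zero (hbij.injective (h.trans hf0.symm))
      refine ⟨⟨(Units.mk0 _ h1) ^ s, Units.mk0 _ h1, rfl⟩, ?_⟩
      have := hfs x
      simpa using this
    choose τ hτ using hmem
    have hsurj : Function.Surjective τ := by
      rintro ⟨_, y, rfl⟩
      obtain ⟨x, hx⟩ := hbij.surjective y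
      have hx0 : x ≠ 0 := fun h => y.ne_zero (by rw [← hx, h, hf0])
      refine ⟨⟨(Units.mk0 x hx0) ^ s, Units.mk0 x hx0, rfl⟩, ?_⟩
      apply Subtype.ext
      apply Units.ext
      rw [hτ, ← hfs]
      simp [hx]
    intro ζ ξ h
    refine Finite.injective_iff_surjective.mpr hsurj ?_
    apply Subtype.ext
    apply Units.ext
    rw [hτ, hτ, h]
  · rintro ⟨hgood, hinj⟩
    refine Finite.injective_iff_bijective.mp ?_
    have hne : ∀ x, x ≠ 0 → f x ≠ 0 := by
      intro x hx
      rw [hfx]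
      refine mul_ne_zero (pow_ne_zero _ hx) ?_
      have := hgood ⟨(Units.mk0 x hx) ^ s, Units.mk0 x hx, rfl⟩
      simpa using this
    intro x y hxy
    by_cases hx : x = 0
    · by_contra h
      exact hne y (fun hy => h (hx.trans hy.symm)) (by rw [← hxy, hx, hf0])
    by_cases hy : y = 0
    · exact absurd (by rw [hxy, hy, hf0]) (hne x hx)
    have h1 := hfs (Units.mk0 x hx)
    have h2 := hfs (Units.mk0 y hy)
    simp only [Units.val_mk0] at h1 h2
    rw [hxy, h2] at h1
    have h3 := congrArg (fun ζ : powGroup F s => ((ζ : Fˣ) : F)) (hinj h1)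
    simp only [Units.val_pow_eq_pow_val, Units.val_mk0] at h3
    have h4 : x ^ n = y ^ n := by
      rw [hfx, hfx, h3] at hxy
      refine mul_right_cancel₀ ?_ hxy
      have := hgood ⟨(Units.mk0 x hx) ^ s, Units.mk0 x hx, rfl⟩
      simpa [h3] using this
    have h5 : (x / y) ^ n.gcd s = 1 := pow_gcd_eq_one.mpr
      ⟨by rw [div_pow, h4, div_self (pow_ne_zero _ hy)],
        by rw [div_pow, ← h3, div_self (pow_ne_zero _ hy)]⟩
    rw [hcop, pow_one, div_eq_one_iff_eq hy] at h5
    exact h5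

open Classical in
/-- Among all permutations `σ` of the group of `s`-th powers, those proportional to the induced map
number `r` if the induced map is a bijection, and there are none otherwise. -/
theorem card_proportional {n e r s : ℕ} (hs : 0 < s) (hrs : Fintype.card F - 1 = r * s) {a : F}
    (hgood : ∀ ζ : powGroup F s, a + ((ζ : Fˣ) : F) ^ e ≠ 0) :
    (Finset.univ.filter fun σ : Equiv.Perm (powGroup F s) => ∀ ζ ξ,
      inducedMap n e s a ζ * ((σ ξ : Fˣ) : F) = inducedMap n e s a ξ * ((σ ζ : Fˣ) : F)).card =
      if Function.Injective (inducedMap n e s a) then r else 0 := by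
  have hne : ∀ ζ, inducedMap n e s a ζ ≠ 0 := fun ζ =>
    mul_ne_zero (pow_ne_zero _ (Units.ne_zero _)) (pow_ne_zero _ (hgood ζ))
  have hmem : ∀ ζ : powGroup F s, ∃ ξ : powGroup F s,
      ((ξ : Fˣ) : F) = inducedMap n e s a ζ := by
    rintro ⟨_, x, rfl⟩
    have h1 := hgood ⟨_, x, rfl⟩
    refine ⟨⟨(x ^ n * Units.mk0 _ h1) ^ s, _, rfl⟩, ?_⟩
    simp only [inducedMap, powMonoidHom_apply]
    push_cast
    simp only [Units.val_mk0]
    rw [mul_pow]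
    ring
  choose τ hτ using hmem
  split_ifs with hinj
  · have hτi : Function.Injective τ := fun ζ ξ h => hinj (by rw [← hτ, ← hτ, h])
    let τ' : Equiv.Perm (powGroup F s) := Equiv.ofBijective τ (Finite.injective_iff_bijective.mp hτi)
    have : (Finset.univ.filter fun σ : Equiv.Perm (powGroup F s) => ∀ ζ ξ,
        inducedMap n e s a ζ * ((σ ξ : Fˣ) : F) = inducedMap n e s a ξ * ((σ ζ : Fˣ) : F)) =
        Finset.univ.image fun u : powGroup F s => τ'.trans (Equiv.mulLeft u) := by
      ext σ
      simp only [Finset.mem_filter, Finset.mem_univ, true_and, Finset.mem_image]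
      constructor
      · intro h
        refine ⟨σ 1 * (τ 1)⁻¹, ?_⟩
        ext ζ
        have h1 := h ζ 1
        rw [← hτ, ← hτ] at h1
        simp only [Equiv.trans_apply, Equiv.coe_mulLeft, τ', Equiv.ofBijective_apply]
        push_cast
        rw [mul_right_comm, mul_comm (((σ 1 : Fˣ) : F)), h1, mul_right_comm]
        simp
      · rintro ⟨u, rfl⟩ ζ ξ
        simp only [Equiv.trans_apply, Equiv.coe_mulLeft, τ', Equiv.ofBijective_apply]
        push_cast
        rw [hτ, hτ]
        ring
    rw [this, Finset.card_image_of_injective, Finset.card_univ, ← Nat.card_eq_fintype_card,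
      card_powGroup hs hrs]
    intro u v h
    have h1 := congrArg (fun σ : Equiv.Perm (powGroup F s) => σ 1) h
    simpa using h1
  · rw [Finset.card_eq_zero, Finset.filter_eq_empty_iff]
    intro σ _ h
    apply hinj
    intro ζ ξ hζξ
    have h1 := h ζ ξ
    rw [hζξ] at h1
    have h2 := mul_left_cancel₀ (hne ξ) h1
    exact (σ.injective (Subtype.ext (Units.ext h2))).symm

/-- A character whose order is the index of the `s`-th powers separates their cosets. -/
theorem mulChar_eq_iff_pow_eq {r s : ℕ} (hr : 0 < r)
    (hrs : Fintype.card F - 1 = r * s) {χ : MulChar F ℂ} (hχ : orderOf χ = r) {x y : F}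
    (hx : x ≠ 0) (hy : y ≠ 0) : χ x = χ y ↔ x ^ s = y ^ s := by
  have hcard : Fintype.card F = r * s + 1 := by
    have := Fintype.card_pos (α := F)
    lia
  constructor
  · intro h
    obtain ⟨g, hg⟩ := IsCyclic.exists_generator (α := Fˣ)
    have h1 : Units.mk0 (x / y) (div_ne_zero hx hy) ∈ Submonoid.powers g :=
      mem_powers_iff_mem_zpowers.mpr (hg _)
    obtain ⟨k, hk⟩ := h1
    have h2 : x / y = (g : F) ^ k := by
      have := congrArg Units.val hk
      simpa using this.symm
    have hχx : χ (x / y) = 1 := by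
      have : χ (x / y) * χ y = χ y := by rw [← map_mul, div_mul_cancel₀ _ hy, h]
      have h0 : χ y ≠ 0 := by
        intro h0
        rcases (show IsUnit (χ y) from (isUnit_iff_ne_zero.mpr hy).map χ) with ⟨w, hw⟩
        exact w.ne_zero (hw.trans h0)
      exact mul_right_cancel₀ h0 (this.trans (one_mul _).symm)
    have h3 : χ ^ k = 1 := by
      rw [MulChar.eq_iff hg, MulChar.pow_apply_coe, ← map_pow, ← h2, hχx,
        MulChar.one_apply_coe]
    obtain ⟨j, rfl⟩ := hχ ▸ orderOf_dvd_of_pow_eq_one h3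
    have h4 : (x / y) ^ s = 1 := by
      rw [h2, ← pow_mul, show r * j * s = (Fintype.card F - 1) * j by rw [hrs]; ring, pow_mul,
        FiniteField.pow_card_sub_one_eq_one _ g.ne_zero, one_pow]
    rwa [div_pow, div_eq_one_iff_eq (pow_ne_zero _ hy)] at h4
  · exact mulChar_eq_of_pow_eq hr hcard (hχ ▸ pow_orderOf_eq_one χ) hx hy

/-- The two-sided estimate for the number `T` of permutation binomials, obtained by summing `count_bound`
over all `r!` permutations of the group of `s`-th powers, each good `a` being counted `r` times. -/
theorem permutation_count {n e r s T : ℕ} (hn : 0 < n) (hr : 0 < r) (hs : 0 < s)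
    (hrs : Fintype.card F - 1 = r * s) (hcop : n.Coprime s) (her : e.Coprime r)
    (hT : T = Nat.card {a : F // Function.Bijective (fun x : F => x ^ (n + e * s) + a * x ^ n)}) :
    ((r - 1).factorial : ℝ) * ((Fintype.card F : ℝ) + 1 -
      ((r : ℝ) ^ (r - 1) * ((r : ℝ) - 3) + 2) * √(Fintype.card F) - 2 * (r : ℝ) ^ (r - 1)) ≤
      (r : ℝ) ^ (r - 1) * T ∧
    (r : ℝ) ^ (r - 1) * T ≤ ((r - 1).factorial : ℝ) * ((Fintype.card F : ℝ) + 1 +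
      ((r : ℝ) ^ (r - 1) * ((r : ℝ) - 3) + 2) * √(Fintype.card F)) := by
  classical
  have : NeZero r := ⟨hr.ne'⟩
  have hcardμ : Fintype.card (powGroup F s) = r := by
    rw [← Nat.card_eq_fintype_card, card_powGroup hs hrs]
  obtain ⟨χ, hχ⟩ := MulChar.exists_mulChar_orderOf F (n := r) ⟨s, hrs⟩
    (Complex.isPrimitiveRoot_exp r hr.ne')
  have hp : Function.Injective fun ζ : powGroup F s => ((ζ : Fˣ) : F) ^ e := by
    intro ζ ξ h
    have hc : (Nat.card (powGroup F s)).Coprime e := by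
      rw [card_powGroup hs hrs]; exact her.symm
    refine hc.pow_left_bijective.injective ?_
    apply Subtype.ext
    apply Units.ext
    simpa using h
  set N : Equiv.Perm (powGroup F s) → ℕ := fun σ => (Finset.univ.filter fun a : F =>
    (∀ ζ : powGroup F s, a + ((ζ : Fˣ) : F) ^ e ≠ 0) ∧ ∀ ζ ξ : powGroup F s,
      inducedMap n e s a ζ * ((σ ξ : Fˣ) : F) = inducedMap n e s a ξ * ((σ ζ : Fˣ) : F)).card with hN
  have hbound : ∀ σ, (Fintype.card F : ℝ) + 1 -
      ((r : ℝ) ^ (r - 1) * ((r : ℝ) - 3) + 2) * √(Fintype.card F) - 2 * (r : ℝ) ^ (r - 1) ≤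
      (r : ℝ) ^ (r - 1) * N σ ∧ (r : ℝ) ^ (r - 1) * N σ ≤ (Fintype.card F : ℝ) + 1 +
      ((r : ℝ) ^ (r - 1) * ((r : ℝ) - 3) + 2) * √(Fintype.card F) := by
    intro σ
    have hb : ∀ ζ : powGroup F s, ∃ b : Fˣ, b ^ s = (ζ : Fˣ) ^ n * (σ ζ : Fˣ)⁻¹ := by
      intro ζ
      obtain ⟨b, hb⟩ := (ζ ^ n * (σ ζ)⁻¹).2
      exact ⟨b, hb⟩
    choose b hb using hb
    refine count_bound hcardμ hχ hp (b := fun ζ => (b ζ : F)) (fun ζ => (b ζ).ne_zero) ?_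
    rw [hN]
    refine congrArg Finset.card (Finset.filter_congr fun a _ => and_congr_right fun hgood => ?_)
    refine forall_congr' fun ζ => forall_congr' fun ξ => ?_
    have hb' : ∀ ζ : powGroup F s, (b ζ : F) ^ s = ((ζ : Fˣ) : F) ^ n * ((σ ζ : Fˣ) : F)⁻¹ := fun ζ => by
      have := congrArg Units.val (hb ζ)
      simpa using this
    rw [mulChar_eq_iff_pow_eq hr hrs hχ (mul_ne_zero (hgood ζ) (b ζ).ne_zero)
      (mul_ne_zero (hgood ξ) (b ξ).ne_zero), mul_pow, mul_pow, hb', hb', inducedMap, inducedMap]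
    have h1 := (σ ζ : Fˣ).ne_zero
    have h2 := (σ ξ : Fˣ).ne_zero
    have h3 : ∀ ζ : powGroup F s, (a + ((ζ : Fˣ) : F) ^ e) ^ s * (((ζ : Fˣ) : F) ^ n * ((σ ζ : Fˣ) : F)⁻¹) =
      (((ζ : Fˣ) : F) ^ n * (a + ((ζ : Fˣ) : F) ^ e) ^ s) / ((σ ζ : Fˣ) : F) := fun ζ => by ring
    rw [h3, h3, div_eq_div_iff h1 h2]
  have hsum : ∑ σ, N σ = r * T := by
    simp only [hN, Finset.card_filter]
    rw [Finset.sum_comm]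
    have h1 : ∀ a : F, (∑ σ : Equiv.Perm (powGroup F s), if
        (∀ ζ : powGroup F s, a + ((ζ : Fˣ) : F) ^ e ≠ 0) ∧ ∀ ζ ξ : powGroup F s,
        inducedMap n e s a ζ * ((σ ξ : Fˣ) : F) = inducedMap n e s a ξ * ((σ ζ : Fˣ) : F)
        then 1 else 0) =
        r * if Function.Bijective (fun x : F => x ^ (n + e * s) + a * x ^ n) then 1 else 0 := by
      intro a
      rw [if_congr (bijective_iff_induced hn hcop a) rfl rfl]
      by_cases hgood : ∀ ζ : powGroup F s, a + ((ζ : Fˣ) : F) ^ e ≠ 0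
      · simp only [and_iff_right hgood, ← Finset.card_filter]
        rw [card_proportional hs hrs hgood]
        split_ifs <;> simp
      · simp only [hgood, false_and, if_false, Finset.sum_const_zero, mul_zero]
    rw [Finset.sum_congr rfl fun a _ => h1 a, ← Finset.mul_sum, ← Finset.card_filter, hT,
      Nat.card_eq_fintype_card, Fintype.card_subtype]
  have hfact : (Fintype.card (Equiv.Perm (powGroup F s)) : ℝ) = r * ((r - 1).factorial : ℝ) := by
    rw [Fintype.card_perm, hcardμ]
    exact_mod_cast (Nat.mul_factorial_pred hr.ne').symm
  have hr' : (0 : ℝ) < r := by exact_mod_cast hr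
  have hsumR : ∑ σ, (r : ℝ) ^ (r - 1) * (N σ : ℝ) = (r : ℝ) * ((r : ℝ) ^ (r - 1) * T) := by
    rw [← Finset.mul_sum, ← Nat.cast_sum, hsum]
    push_cast
    ring
  constructor
  · refine le_of_mul_le_mul_left ?_ hr'
    rw [← hsumR, ← mul_assoc, ← hfact]
    have := Finset.card_nsmul_le_sum Finset.univ (fun σ => (r : ℝ) ^ (r - 1) * (N σ : ℝ)) _
      fun σ _ => (hbound σ).1
    rwa [nsmul_eq_mul, Finset.card_univ] at this
  · refine le_of_mul_le_mul_left ?_ hr'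
    rw [← hsumR, ← mul_assoc, ← hfact]
    have := Finset.sum_le_card_nsmul Finset.univ (fun σ => (r : ℝ) ^ (r - 1) * (N σ : ℝ)) _
      fun σ _ => (hbound σ).2
    rwa [nsmul_eq_mul, Finset.card_univ] at this

end Reduction

end

/-! ### Numerical estimates and the conclusion -/

/-- The size condition forces `rʳ < √q` once `r ≥ 3`. -/
theorem pow_self_lt_sqrt {q r s : ℕ} (hq : 4 ≤ q) (hr : 3 ≤ r) (hrs : q - 1 = r * s)
    (hbig : 2 * (q : ℝ) * Real.log (Real.log q) / Real.log q < (s : ℝ)) :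
    (r : ℝ) ^ r < √q := by
  set y := Real.log q with hy
  set w := Real.log y with hw
  have hq' : (4 : ℝ) ≤ q := by exact_mod_cast hq
  have hy4 : 1.386 < y := by
    have h1 : Real.log 4 ≤ y := Real.log_le_log (by norm_num) hq'
    have h2 : Real.log 4 = 2 * Real.log 2 := by
      rw [show (4 : ℝ) = 2 ^ 2 by norm_num, Real.log_pow]; norm_num
    linarith [Real.log_two_gt_d9]
  have hr' : (3 : ℝ) ≤ r := by exact_mod_cast hr
  have hwy : 1 - y⁻¹ ≤ w := Real.one_sub_inv_le_log_of_pos (by linarith)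
  have hw0 : 0 < w := Real.log_pos (by linarith)
  have hrsR : (r : ℝ) * s = q - 1 := by
    rw [← Nat.cast_mul, ← hrs, Nat.cast_sub (by lia), Nat.cast_one]
  have hrw : 2 * r * w < y := by
    rw [div_lt_iff₀ (by linarith)] at hbig
    have h1 : r * (2 * q * w) < r * (s * y) := mul_lt_mul_of_pos_left hbig (by linarith)
    have h2 : r * (s * y) ≤ q * y := by
      rw [← mul_assoc, hrsR]
      exact mul_le_mul_of_nonneg_right (by linarith) (by linarith)
    have h3 : (q : ℝ) * (2 * r * w) < q * y := by linarith
    exact lt_of_mul_lt_mul_left h3 (by linarith)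
  -- `1 - 1 / y ≤ w < y / 6` excludes `y ≤ 2`, hence `w > 1 / 2`
  have hy2 : 2 < y := by
    by_contra! h
    have h1 : 6 * w < y := by nlinarith
    have h2 : 6 * (1 - y⁻¹) < y := by linarith
    have h3 : y * y⁻¹ = 1 := mul_inv_cancel₀ (by linarith)
    nlinarith
  have hw2 : 1 / 2 < w := by
    have : y⁻¹ < 2⁻¹ := inv_strictAnti₀ (by norm_num) hy2
    linarith
  have hry : (r : ℝ) ≤ y := by nlinarith
  have hlr : Real.log r ≤ w := Real.log_le_log (by linarith) hry
  rw [← Real.log_lt_log_iff (by positivity) (Real.sqrt_pos.mpr (by linarith)), Real.log_pow,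
    Real.log_sqrt (by linarith)]
  nlinarith

/-- The field with five elements is excluded for `r = 2` by the size condition. -/
theorem five_excluded :
    ¬ 2 * ((5 : ℕ) : ℝ) * Real.log (Real.log (5 : ℕ)) / Real.log (5 : ℕ) < ((2 : ℕ) : ℝ) := by
  push_cast
  set y := Real.log 5 with hy
  have h2 : Real.log 4 = 2 * Real.log 2 := by
    rw [show (4 : ℝ) = 2 ^ 2 by norm_num, Real.log_pow]; norm_num
  have hy4 : 1.3862 < y := by
    have h1 : Real.log 4 ≤ y := Real.log_le_log (by norm_num) (by norm_num)
    linarith [Real.log_two_gt_d9]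
  have hy5 : y < 2 := by
    have h1 : y = Real.log 4 + Real.log (5 / 4) := by
      rw [← Real.log_mul (by norm_num) (by norm_num)]; norm_num; exact hy
    have h3 := Real.log_le_sub_one_of_pos (show (0 : ℝ) < 5 / 4 by norm_num)
    linarith [Real.log_two_lt_d9]
  have hwy : 1 - y⁻¹ ≤ Real.log y := Real.one_sub_inv_le_log_of_pos (by linarith)
  have h3 : y * y⁻¹ = 1 := mul_inv_cancel₀ (by linarith)
  rw [not_lt, le_div_iff₀ (by linarith)]
  nlinarith

/-- The lower bound of `permutation_count` yields two values of `a`, hence a nonzero one. -/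
theorem one_lt_count {q r s T : ℕ} (hq : 4 ≤ q) (hr : 0 < r) (hrs : q - 1 = r * s)
    (hbig : 2 * (q : ℝ) * Real.log (Real.log q) / Real.log q < (s : ℝ))
    (hT : ((r - 1).factorial : ℝ) * ((q : ℝ) + 1 -
      ((r : ℝ) ^ (r - 1) * ((r : ℝ) - 3) + 2) * √q - 2 * (r : ℝ) ^ (r - 1)) ≤
      (r : ℝ) ^ (r - 1) * T) : 1 < T := by
  have hq' : (4 : ℝ) ≤ q := by exact_mod_cast hq
  rcases (show r = 1 ∨ r = 2 ∨ 3 ≤ r by lia) with rfl | rfl | hr3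
  · norm_num at hT
    have : (1 : ℝ) < T := by linarith
    exact_mod_cast this
  · have h6 : 6 ≤ q := by
      by_contra! h
      have h5 : q = 5 := by lia
      subst h5
      obtain rfl : s = 2 := by lia
      exact five_excluded hbig
    have h7 : (7 : ℝ) ≤ q := by exact_mod_cast (show 7 ≤ q by lia)
    norm_num at hT
    have : (1 : ℝ) < T := by linarith
    exact_mod_cast this
  · have hlt := pow_self_lt_sqrt hq hr3 hrs hbig
    set S := √(q : ℝ) with hS
    have hSq : S * S = q := Real.mul_self_sqrt (by linarith)
    set R : ℝ := (r : ℝ) ^ (r - 1) with hR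
    have hr' : (3 : ℝ) ≤ r := by exact_mod_cast hr3
    have hrR : (r : ℝ) ^ r = r * R := by
      rw [hR, ← pow_succ', Nat.sub_add_cancel hr]
    have hR1 : 1 ≤ R := one_le_pow₀ (by linarith)
    rw [hrR] at hlt
    have hS3 : 3 < S := by nlinarith
    have hL : R < (q : ℝ) + 1 - (R * ((r : ℝ) - 3) + 2) * S - 2 * R := by
      have h1 : r * R * S ≤ S * S := mul_le_mul_of_nonneg_right hlt.le (by linarith)
      -- `q - (r - 3) R √q ≥ 3 R √q` by `r R < √q`, and `√q > 3` absorbs the remaining terms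
      have h2 : 3 * R - 2 ≤ (3 * R - 2) * S - 2 * (3 * R - 2) := by nlinarith
      nlinarith
    have hf : (1 : ℝ) ≤ ((r - 1).factorial : ℝ) := by exact_mod_cast Nat.factorial_pos _
    have h3 : R < R * T := by
      refine hL.trans_le (le_trans ?_ hT)
      exact le_mul_of_one_le_left (by linarith) hf
    have : (1 : ℝ) < T := by
      by_contra! h
      nlinarith
    exact_mod_cast this

/-- Let `q ≥ 4` be a prime power, `m > n > 0` with `gcd(m, n, q-1) = 1`. If
`gcd(m-n, q-1) > 2q(log log q)/log q` then some `x^m + a x^n` with `a ≠ 0` permutes `F_q`;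
moreover, with `T` the number of `a ∈ F_q` for which `x^m + a x^n` permutes `F_q` and
`r := (q-1)/gcd(m-n, q-1)`, one has
`(q - 2√q + 1)/r^{r-1} - (r-3)√q - 2 ≤ T/(r-1)! ≤ (q + 2√q + 1)/r^{r-1} + (r-3)√q`. -/
theorem permutation_binomial_existence_and_count (F : Type) [Field F] [Fintype F]
    (hq : 4 ≤ Fintype.card F) (m n : ℕ) (hn : 0 < n) (hnm : n < m)
    (hgcd : Nat.gcd m (Nat.gcd n (Fintype.card F - 1)) = 1)
    (hbig : 2 * (Fintype.card F : ℝ) * Real.log (Real.log (Fintype.card F)) /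
        Real.log (Fintype.card F) < (Nat.gcd (m - n) (Fintype.card F - 1) : ℝ)) :
    (∃ a : F, a ≠ 0 ∧ Function.Bijective (fun x : F => x ^ m + a * x ^ n)) ∧
    ∀ T r : ℕ,
      T = Nat.card {a : F // Function.Bijective (fun x : F => x ^ m + a * x ^ n)} →
      r = (Fintype.card F - 1) / Nat.gcd (m - n) (Fintype.card F - 1) →
      ((Fintype.card F : ℝ) - 2 * Real.sqrt (Fintype.card F) + 1) / (r : ℝ) ^ (r - 1)
          - ((r : ℝ) - 3) * Real.sqrt (Fintype.card F) - 2
        ≤ (T : ℝ) / (Nat.factorial (r - 1)) ∧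
      (T : ℝ) / (Nat.factorial (r - 1))
        ≤ ((Fintype.card F : ℝ) + 2 * Real.sqrt (Fintype.card F) + 1) / (r : ℝ) ^ (r - 1)
          + ((r : ℝ) - 3) * Real.sqrt (Fintype.card F) := by
  set q := Fintype.card F with hqdef
  set s := Nat.gcd (m - n) (q - 1) with hs
  have hs0 : 0 < s := Nat.gcd_pos_of_pos_left _ (by lia)
  obtain ⟨e, he⟩ : s ∣ m - n := Nat.gcd_dvd_left _ _
  obtain ⟨r, hr⟩ : s ∣ q - 1 := Nat.gcd_dvd_right _ _
  have hr0 : 0 < r := Nat.pos_of_ne_zero (by rintro rfl; lia)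
  have hm : m = n + e * s := by rw [mul_comm e, ← he]; lia
  have hrs : q - 1 = r * s := by rw [hr, mul_comm]
  have her : e.Coprime r := by
    have := Nat.coprime_div_gcd_div_gcd (m := m - n) (n := q - 1) hs0
    rw [← hs, he, hr, Nat.mul_div_cancel_left _ hs0, Nat.mul_div_cancel_left _ hs0] at this
    exact this
  have hcop : n.Coprime s := by
    have h1 : n.gcd s ∣ Nat.gcd m (Nat.gcd n (q - 1)) := by
      refine Nat.dvd_gcd ?_ (Nat.dvd_gcd (Nat.gcd_dvd_left _ _)
        ((Nat.gcd_dvd_right _ _).trans (Nat.gcd_dvd_right _ _)))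
      rw [hm]
      exact dvd_add (Nat.gcd_dvd_left _ _) ((Nat.gcd_dvd_right _ _).mul_left _)
    rw [hgcd] at h1
    exact Nat.dvd_one.mp h1
  obtain ⟨hlow, hup⟩ := permutation_count (F := F) hn hr0 hs0 hrs hcop her rfl
  rw [← hm] at hlow hup
  constructor
  · have h1 := one_lt_count hq hr0 hrs hbig hlow
    rw [Finite.one_lt_card_iff_nontrivial] at h1
    obtain ⟨⟨a, ha⟩, ⟨b, hb⟩, hab⟩ := h1
    by_cases h : a = 0
    · exact ⟨b, fun hb0 => hab (Subtype.ext (h.trans hb0.symm)), hb⟩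
    · exact ⟨a, h, ha⟩
  · intro T r' hT hr'
    obtain rfl : r' = r := by rw [hr', hrs, Nat.mul_div_cancel _ hs0]
    rw [← hT] at hlow hup
    have hR : (0 : ℝ) < (r' : ℝ) ^ (r' - 1) := pow_pos (by exact_mod_cast hr0) _
    have hf : (0 : ℝ) < ((r' - 1).factorial : ℝ) := by exact_mod_cast Nat.factorial_pos _
    set R : ℝ := (r' : ℝ) ^ (r' - 1)
    set f : ℝ := ((r' - 1).factorial : ℝ)
    constructor
    · rw [le_div_iff₀ hf]
      refine le_of_mul_le_mul_left (le_trans (le_of_eq ?_) hlow) hR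
      field_simp
      ring
    · rw [div_le_iff₀ hf]
      refine le_of_mul_le_mul_left (hup.trans (le_of_eq ?_)) hR
      field_simp
      ring
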